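/- arXiv:1902.03887 — 2 statements merged into one kernel-verified Lean document; each statement's English description precedes it below -/
import Mathlib

section
/- Let P be the uniform probability distribution on the boundary L of the regular hexagon with vertices (0,0), (1,0), (3/2,√3/2), (1,√3), (0,√3), (−1/2,√3/2), and let Vₙ(P) denote the nth quantization error. Then the one-dimensional quantization coefficient of P exists as a finite positive number and equals 3; that is, lim_{n→∞} n² Vₙ(P) = 3. -/
open MeasureTheory Real Filter
open scoped ENNReal

noncomputable section

/-- The plane `ℝ²` with the Euclidean norm. -/
abbrev E2 : Type := EuclideanSpace ℝ (Fin 2)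

/-- The point `(a, b)` of `ℝ²`. -/
def pt (a b : ℝ) : E2 := !₂[a, b]

/-- The `n`th quantization error of a Borel probability measure `P` on `ℝ²`:
the infimum of `∫ min_{a ∈ α} ‖x - a‖² dP(x)` over all (nonempty) finite sets
`α ⊆ ℝ²` with at most `n` elements. -/
def quantErr (P : Measure E2) (n : ℕ) : ℝ :=
  sInf {v : ℝ | ∃ α : Set E2, α.Finite ∧ α.Nonempty ∧ α.ncard ≤ n ∧
    v = ∫ x, sInf ((fun a => ‖x - a‖ ^ 2) '' α) ∂P}

/-- `α` is an optimal set of `n`-means for `P` if it attains the `n`th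
quantization error. -/
def IsOptimalSet (P : Measure E2) (n : ℕ) (α : Set E2) : Prop :=
  α.Finite ∧ α.Nonempty ∧ α.ncard ≤ n ∧
    (∫ x, sInf ((fun a => ‖x - a‖ ^ 2) '' α) ∂P) = quantErr P n

/-- The boundary `L` of the regular hexagon with vertices `O(0,0)`, `A₁(1,0)`,
`A₂(3/2,√3/2)`, `A₃(1,√3)`, `A₄(0,√3)`, `A₅(-1/2,√3/2)`. -/
def hexL : Set E2 :=
  segment ℝ (pt 0 0) (pt 1 0) ∪ segment ℝ (pt 1 0) (pt (3/2) (Real.sqrt 3/2)) ∪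
  segment ℝ (pt (3/2) (Real.sqrt 3/2)) (pt 1 (Real.sqrt 3)) ∪
  segment ℝ (pt 1 (Real.sqrt 3)) (pt 0 (Real.sqrt 3)) ∪
  segment ℝ (pt 0 (Real.sqrt 3)) (pt (-(1/2)) (Real.sqrt 3/2)) ∪
  segment ℝ (pt (-(1/2)) (Real.sqrt 3/2)) (pt 0 0)

/-- The uniform probability distribution on `hexL`: density `1/6` with respect
to the one-dimensional Hausdorff (arc-length) measure on `hexL`. -/
def hexP : Measure E2 := (6 : ℝ≥0∞)⁻¹ • (μH[1] : Measure E2).restrict hexL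

/-!
Let `ℓ` be the total length of finitely many segments with pairwise disjoint interiors, carrying the
uniform distribution `P`; then `n² Vₙ(P) → ℓ² / 12`, and the hexagon is the case `ℓ = 6`.

For the lower bound, shorten every segment slightly at both ends. The remaining pieces are compact
and disjoint, so a ball of small radius `t` meets only one of them and covers a length of at most
`2 t`. Hence, for `n` centers, the length at distance at least `t` from all of them is at least
`m - 2 n t`, where `m` is the remaining length, and integrating `2 t (m - 2 n t)` over
`0 ≤ t ≤ m / (2 n)` gives `m³ / (12 n²)`; finally `m → ℓ`.

For the upper bound, cut a segment of length `ℓᵢ` into `⌊n ℓᵢ / ℓ⌋` equal parts and use their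
midpoints as centers.
-/

open Metric
open AffineMap (lineMap)
open scoped NNReal Topology

/-- The mean squared distance `∫ d(x, α)² dμ(x)` to the set `α`. It takes values in `ℝ≥0∞`, so no
integrability has to be known in advance; for `α = ∅` it is `0`, the junk value of `infDist`. -/
def distortion {X : Type*} [PseudoMetricSpace X] [MeasurableSpace X] (μ : Measure X) (α : Set X) :
    ℝ≥0∞ :=
  ∫⁻ x, ENNReal.ofReal (infDist x α ^ 2) ∂μ

section Distortion

variable {X : Type*} [PseudoMetricSpace X] [MeasurableSpace X]

lemma distortion_smul_measure (c : ℝ≥0∞) (μ : Measure X) (α : Set X) :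
    distortion (c • μ) α = c * distortion μ α := by
  rw [distortion, lintegral_smul_measure, smul_eq_mul, distortion]

lemma distortion_restrict_mono {s t : Set X} (hst : s ⊆ t) (μ : Measure X) (α : Set X) :
    distortion (μ.restrict s) α ≤ distortion (μ.restrict t) α :=
  lintegral_mono_set hst

lemma distortion_anti {α β : Set X} (hα : α.Nonempty) (hαβ : α ⊆ β) (μ : Measure X) :
    distortion μ β ≤ distortion μ α := by
  refine lintegral_mono fun x => ?_
  have hdist : infDist x β ≤ infDist x α := infDist_le_infDist_of_subset hαβ hα
  gcongr
  exact infDist_nonneg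

lemma distortion_restrict_iUnion_le {ι : Type*} [Fintype ι] (s : ι → Set X) (μ : Measure X)
    (α : Set X) :
    distortion (μ.restrict (⋃ i, s i)) α ≤ ∑ i, distortion (μ.restrict (s i)) α :=
  (lintegral_iUnion_le s _).trans_eq (tsum_fintype _)

lemma distortion_restrict_ne_top_of_isCompact {s : Set X} (hs : IsCompact s) {μ : Measure X}
    (hμs : μ s ≠ ∞) (α : Set X) : distortion (μ.restrict s) α ≠ ∞ :=
  (setLIntegral_lt_top_of_isCompact hμs hs
    (f := fun x => (infDist x α ^ 2).toNNReal) (by fun_prop)).ne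

end Distortion

section QuantErr

lemma sInf_image_sq_norm_sub {E : Type*} [SeminormedAddCommGroup E] {α : Set E} (hα : α.Finite)
    (hne : α.Nonempty) (x : E) :
    sInf ((fun a => ‖x - a‖ ^ 2) '' α) = infDist x α ^ 2 := by
  obtain ⟨a, ha, hxa⟩ := hα.isCompact.exists_infDist_eq_dist hne x
  refine IsLeast.csInf_eq ⟨⟨a, ha, ?_⟩, ?_⟩
  · simp only [hxa, dist_eq_norm]
  · rintro _ ⟨b, hb, rfl⟩
    have hxb : infDist x α ≤ ‖x - b‖ := dist_eq_norm x b ▸ infDist_le_dist_of_mem hb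
    exact pow_le_pow_left₀ infDist_nonneg hxb 2

lemma integral_sInf_image_sq_norm_sub {E : Type*} [SeminormedAddCommGroup E] [MeasurableSpace E]
    [OpensMeasurableSpace E] {α : Set E} (hα : α.Finite) (hne : α.Nonempty) (μ : Measure E) :
    ∫ x, sInf ((fun a => ‖x - a‖ ^ 2) '' α) ∂μ = (distortion μ α).toReal := by
  simp_rw [sInf_image_sq_norm_sub hα hne]
  exact integral_eq_lintegral_of_nonneg_ae (.of_forall fun x => sq_nonneg _)
    (measurable_infDist.pow_const 2).aestronglyMeasurable

lemma quantErr_le_toReal_distortion {α : Set E2} (hα : α.Finite) (hne : α.Nonempty) {n : ℕ}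
    (hcard : α.ncard ≤ n) (P : Measure E2) : quantErr P n ≤ (distortion P α).toReal := by
  refine csInf_le ⟨0, ?_⟩ ⟨α, hα, hne, hcard, (integral_sInf_image_sq_norm_sub hα hne P).symm⟩
  rintro _ ⟨β, hβ, hβne, -, rfl⟩
  rw [integral_sInf_image_sq_norm_sub hβ hβne]
  exact ENNReal.toReal_nonneg

lemma le_quantErr {P : Measure E2} {n : ℕ} (hn : 0 < n) {v : ℝ}
    (hv : ∀ α : Set E2, α.Finite → α.Nonempty → α.ncard ≤ n → v ≤ (distortion P α).toReal) :
    v ≤ quantErr P n := by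
  refine le_csInf ⟨_, {0}, Set.finite_singleton 0, Set.singleton_nonempty 0, ?_, rfl⟩ ?_
  · rwa [Set.ncard_singleton]
  · rintro _ ⟨α, hα, hne, hcard, rfl⟩
    rw [integral_sInf_image_sq_norm_sub hα hne]
    exact hv α hα hne hcard

end QuantErr

section LowerBound

lemma integral_sub_mul_mul_self (m b R : ℝ) :
    ∫ t in (0 : ℝ)..R, (m - b * t) * t = m * R ^ 2 / 2 - b * R ^ 3 / 3 := by
  have hexpand (t : ℝ) : (m - b * t) * t = m * t ^ 1 - b * t ^ 2 := by ring
  simp_rw [hexpand]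
  rw [intervalIntegral.integral_sub
      (Continuous.intervalIntegrable (by fun_prop) _ _)
      (Continuous.intervalIntegrable (by fun_prop) _ _),
    intervalIntegral.integral_const_mul, intervalIntegral.integral_const_mul,
    integral_pow, integral_pow]
  norm_num
  ring

lemma ofReal_le_lintegral_sq_of_tail {Ω : Type*} [MeasurableSpace Ω] {μ : Measure Ω} {f : Ω → ℝ}
    (hf₀ : 0 ≤ᵐ[μ] f) (hf : AEMeasurable f μ) {m b : ℝ} (hm : 0 ≤ m) (hb : 0 < b)
    (htail : ∀ t ∈ Set.Ioc 0 (m / b), ENNReal.ofReal (m - b * t) ≤ μ {x | t ≤ f x}) :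
    ENNReal.ofReal (m ^ 3 / (3 * b ^ 2)) ≤ ∫⁻ x, ENNReal.ofReal (f x ^ 2) ∂μ := by
  have hR : 0 ≤ m / b := by positivity
  have hnonneg : ∀ t ∈ Set.Ioc 0 (m / b), 0 ≤ m - b * t := fun t ht => by
    linarith [(le_div_iff₀' hb).1 ht.2]
  have hlayer := lintegral_rpow_eq_lintegral_meas_le_mul μ hf₀ hf (p := 2) two_pos
  simp only [Real.rpow_two, show (2 : ℝ) - 1 = 1 by norm_num, Real.rpow_one] at hlayer
  calc ENNReal.ofReal (m ^ 3 / (3 * b ^ 2))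
      = ENNReal.ofReal (2 * ∫ t in Set.Ioc 0 (m / b), (m - b * t) * t) := by
        rw [← intervalIntegral.integral_of_le hR, integral_sub_mul_mul_self]
        congr 1
        field_simp
        ring
    _ = ENNReal.ofReal 2 * ∫⁻ t in Set.Ioc 0 (m / b), ENNReal.ofReal ((m - b * t) * t) := by
        rw [ENNReal.ofReal_mul zero_le_two, ofReal_integral_eq_lintegral_ofReal]
        · exact (Continuous.integrableOn_Icc (by fun_prop)).mono_set Set.Ioc_subset_Icc_self
        · filter_upwards [ae_restrict_mem measurableSet_Ioc] with t ht
          exact mul_nonneg (hnonneg t ht) ht.1.le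
    _ ≤ ENNReal.ofReal 2 * ∫⁻ t in Set.Ioc 0 (m / b), μ {x | t ≤ f x} * ENNReal.ofReal t := by
        gcongr 1
        refine setLIntegral_mono' measurableSet_Ioc fun t ht => ?_
        rw [ENNReal.ofReal_mul (hnonneg t ht)]
        gcongr
        exact htail t ht
    _ ≤ ENNReal.ofReal 2 * ∫⁻ t in Set.Ioi 0, μ {x | t ≤ f x} * ENNReal.ofReal t := by
        gcongr 1
        exact lintegral_mono_set Set.Ioc_subset_Ioi_self
    _ = ∫⁻ x, ENNReal.ofReal (f x ^ 2) ∂μ := hlayer.symm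

variable {X : Type*} [PseudoMetricSpace X] [MeasurableSpace X] {μ : Measure X} {α : Set X}

lemma measure_infDist_lt_le (hα : α.Finite) (hne : α.Nonempty) {n : ℕ} (hcard : α.ncard ≤ n)
    {t : ℝ} {v : ℝ≥0∞} (hball : ∀ a ∈ α, μ (ball a t) ≤ v) :
    μ {x | infDist x α < t} ≤ n * v := by
  have hcover : {x | infDist x α < t} ⊆ ⋃ a ∈ hα.toFinset, ball a t := fun x hx => by
    obtain ⟨a, ha, hxa⟩ := (infDist_lt_iff hne).1 hx
    exact Set.mem_biUnion (hα.mem_toFinset.2 ha) hxa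
  calc μ {x | infDist x α < t}
      ≤ ∑ a ∈ hα.toFinset, μ (ball a t) :=
        (measure_mono hcover).trans (measure_biUnion_finset_le _ _)
    _ ≤ hα.toFinset.card • v :=
        Finset.sum_le_card_nsmul _ _ _ fun a ha => hball a (hα.mem_toFinset.1 ha)
    _ ≤ n * v := by
        rw [nsmul_eq_mul, ← Set.ncard_eq_toFinset_card α hα]
        gcongr

/-- The `n` balls of radius `t` around `α` cover mass at most `c n t`, so the mass at distance at
least `t` from `α` is at least `m - c n t`. -/
lemma ofReal_le_distortion_of_measure_ball_le [OpensMeasurableSpace X] (hα : α.Finite)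
    (hne : α.Nonempty) {n : ℕ} (hn : 0 < n) (hcard : α.ncard ≤ n) {c m : ℝ} (hc : 0 < c)
    (hm : 0 ≤ m) (hmass : ENNReal.ofReal m ≤ μ Set.univ)
    (hball : ∀ a ∈ α, ∀ t ≤ m / (c * n), μ (ball a t) ≤ ENNReal.ofReal (c * t)) :
    ENNReal.ofReal (m ^ 3 / (3 * (c * n) ^ 2)) ≤ distortion μ α := by
  refine ofReal_le_lintegral_sq_of_tail (.of_forall fun x => infDist_nonneg)
    measurable_infDist.aemeasurable hm (by positivity) fun t ht => ?_
  have hnear : μ {x | infDist x α < t} ≤ ENNReal.ofReal (c * n * t) := by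
    refine (measure_infDist_lt_le hα hne hcard fun a ha => hball a ha t ht.2).trans_eq ?_
    rw [← ENNReal.ofReal_natCast, ← ENNReal.ofReal_mul n.cast_nonneg]
    congr 1
    ring
  have hsplit : μ Set.univ ≤ μ {x | t ≤ infDist x α} + μ {x | infDist x α < t} :=
    (measure_mono fun x _ => le_or_gt t (infDist x α)).trans (measure_union_le _ _)
  have htnn : 0 ≤ c * n * t := by have := ht.1; positivity
  rw [ENNReal.ofReal_sub _ htnn, tsub_le_iff_right]
  exact hmass.trans (hsplit.trans (by gcongr))

end LowerBound

section Segments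

variable {E : Type*} [NormedAddCommGroup E] [NormedSpace ℝ E]

lemma isCompact_segment (x y : E) : IsCompact (segment ℝ x y) := by
  rw [segment_eq_image_lineMap]
  exact isCompact_Icc.image AffineMap.lineMap_continuous

lemma lineMap_image_Icc_subset_openSegment (x y : E) {ε : ℝ} (hε : 0 < ε) :
    lineMap x y '' Set.Icc ε (1 - ε) ⊆ openSegment ℝ x y := by
  rw [openSegment_eq_image_lineMap]
  exact Set.image_mono fun t ht => ⟨hε.trans_le ht.1, by linarith [ht.2]⟩

variable [MeasurableSpace E] [BorelSpace E]

lemma hausdorffMeasure_lineMap_image_Icc (x y : E) (u v : ℝ) :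
    μH[1] (lineMap x y '' Set.Icc u v) = ENNReal.ofReal ((v - u) * dist x y) := by
  rw [hausdorffMeasure_lineMap_image, hausdorffMeasure_real, Real.volume_Icc, ENNReal.smul_def,
    smul_eq_mul, mul_comm, ENNReal.ofReal_mul' dist_nonneg, ← coe_nndist, ENNReal.ofReal_coe_nnreal]

lemma hausdorffMeasure_openSegment (x y : E) : μH[1] (openSegment ℝ x y) = edist x y := by
  rw [openSegment_eq_image_lineMap, hausdorffMeasure_lineMap_image, hausdorffMeasure_real,
    Real.volume_Ioo, sub_zero, ENNReal.ofReal_one, ENNReal.smul_def, smul_eq_mul, mul_one,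
    edist_nndist]

lemma measurableSet_openSegment {x y : E} (hxy : x ≠ y) : MeasurableSet (openSegment ℝ x y) := by
  rw [openSegment_eq_image_lineMap]
  exact ((antilipschitzWith_lineMap hxy).isClosedEmbedding
    (lipschitzWith_lineMap x y).uniformContinuous).measurableEmbedding.measurableSet_image.2
    measurableSet_Ioo

lemma hausdorffMeasure_restrict_segment (x y : E) :
    (μH[1] : Measure E).restrict (segment ℝ x y) =
      nndist x y • Measure.map (lineMap x y) (volume.restrict (Set.Icc (0 : ℝ) 1)) := by
  have hcont : Measurable (lineMap x y : ℝ → E) := AffineMap.lineMap_continuous.measurable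
  ext s hs
  rw [Measure.restrict_apply hs, Measure.smul_apply, Measure.map_apply hcont hs,
    Measure.restrict_apply (hcont hs), segment_eq_image_lineMap, ← Set.image_preimage_inter,
    hausdorffMeasure_lineMap_image, hausdorffMeasure_real]

lemma hausdorffMeasure_le_ediam_of_subset_range_lineMap {x y : E} {s : Set E}
    (hs : s ⊆ Set.range (lineMap x y : ℝ → E)) : μH[1] s ≤ ediam s := by
  obtain ⟨t, rfl⟩ := Set.subset_range_iff_exists_image_eq.1 hs
  rw [hausdorffMeasure_lineMap_image, hausdorffMeasure_real, ENNReal.smul_def, smul_eq_mul]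
  rcases eq_or_ne x y with rfl | hxy
  · simp
  have hcancel : nndist x y * (nndist x y)⁻¹ = 1 := mul_inv_cancel₀ (by simpa using hxy)
  calc (nndist x y : ℝ≥0∞) * volume t
      ≤ nndist x y * (((nndist x y)⁻¹ : ℝ≥0) * ediam (lineMap x y '' t)) := by
        gcongr
        exact (Real.volume_le_diam t).trans ((antilipschitzWith_lineMap hxy).le_mul_ediam_image t)
    _ = ediam (lineMap x y '' t) := by
        rw [← mul_assoc, ← ENNReal.coe_mul, hcancel, ENNReal.coe_one, one_mul]

lemma hausdorffMeasure_ball_inter_le {x y : E} {s : Set E}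
    (hs : s ⊆ Set.range (lineMap x y : ℝ → E)) (a : E) (t : ℝ) :
    μH[1] (ball a t ∩ s) ≤ ENNReal.ofReal (2 * t) := by
  refine (hausdorffMeasure_le_ediam_of_subset_range_lineMap
    (Set.inter_subset_right.trans hs)).trans ((ediam_mono Set.inter_subset_left).trans ?_)
  rw [ENNReal.ofReal_mul zero_le_two, ENNReal.ofReal_ofNat, ← eball_ofReal]
  exact ediam_eball_le

end Segments

section SeparatedPieces

lemma exists_pairwise_disjoint_thickening {X ι : Type*} [PseudoEMetricSpace X] [Finite ι]
    {K : ι → Set X} (hK : ∀ i, IsCompact (K i)) (hcl : ∀ i, IsClosed (K i))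
    (hdisj : Pairwise (Function.onFun Disjoint K)) :
    ∃ r > 0, Pairwise (Function.onFun Disjoint fun i => thickening r (K i)) := by
  have hsmall : ∀ i j, ∀ᶠ r in 𝓝[>] (0 : ℝ),
      i ≠ j → Disjoint (thickening r (K i)) (thickening r (K j)) := fun i j => by
    by_cases hij : i = j
    · simp [hij]
    obtain ⟨δ, hδ, hδdisj⟩ := (hdisj hij).exists_thickenings (hK i) (hcl j)
    filter_upwards [Ioo_mem_nhdsGT hδ] with r hr _
    exact hδdisj.mono (thickening_mono hr.2.le _) (thickening_mono hr.2.le _)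
  obtain ⟨r, hr, hr₀⟩ := ((eventually_all.2 fun i => eventually_all.2 (hsmall i)).and
    self_mem_nhdsWithin).exists
  exact ⟨r, hr₀, fun i j hij => hr i j hij⟩

lemma exists_ball_inter_iUnion_subset {X ι : Type*} [PseudoMetricSpace X] [Nonempty ι]
    {K : ι → Set X} {r : ℝ}
    (hdisj : Pairwise (Function.onFun Disjoint fun i => thickening r (K i))) (a : X) :
    ∃ i, ball a r ∩ ⋃ j, K j ⊆ K i := by
  by_cases ha : ∃ i, a ∈ thickening r (K i)
  · obtain ⟨i, hai⟩ := ha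
    refine ⟨i, fun z hz => ?_⟩
    obtain ⟨j, hzj⟩ := Set.mem_iUnion.1 hz.2
    have haj : a ∈ thickening r (K j) := mem_thickening_iff.2 ⟨z, hzj, mem_ball'.1 hz.1⟩
    rwa [hdisj.eq (Set.not_disjoint_iff.2 ⟨a, hai, haj⟩)]
  · push Not at ha
    refine ⟨Classical.arbitrary ι, fun z hz => ?_⟩
    obtain ⟨j, hzj⟩ := Set.mem_iUnion.1 hz.2
    exact absurd (mem_thickening_iff.2 ⟨z, hzj, mem_ball'.1 hz.1⟩) (ha j)

lemma exists_hausdorffMeasure_ball_inter_iUnion_trimmed_le {E ι : Type*} [NormedAddCommGroup E]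
    [NormedSpace ℝ E] [MeasurableSpace E] [BorelSpace E] [Finite ι] [Nonempty ι] {a b : ι → E}
    {ε : ℝ} (hε : 0 < ε)
    (hdisj : Pairwise (Function.onFun Disjoint fun i => openSegment ℝ (a i) (b i))) :
    ∃ r > 0, ∀ x : E, ∀ t ≤ r,
      μH[1] (ball x t ∩ ⋃ i, lineMap (a i) (b i) '' Set.Icc ε (1 - ε)) ≤
        ENNReal.ofReal (2 * t) := by
  have hcompact (i : ι) : IsCompact (lineMap (a i) (b i) '' Set.Icc ε (1 - ε)) :=
    isCompact_Icc.image AffineMap.lineMap_continuous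
  obtain ⟨r, hr, hthick⟩ := exists_pairwise_disjoint_thickening hcompact
    (fun i => (hcompact i).isClosed) fun i j hij =>
      (hdisj hij).mono (lineMap_image_Icc_subset_openSegment _ _ hε)
        (lineMap_image_Icc_subset_openSegment _ _ hε)
  refine ⟨r, hr, fun x t htr => ?_⟩
  obtain ⟨i, hi⟩ := exists_ball_inter_iUnion_subset hthick x
  calc μH[1] (ball x t ∩ ⋃ i, lineMap (a i) (b i) '' Set.Icc ε (1 - ε))
      ≤ μH[1] (ball x t ∩ lineMap (a i) (b i) '' Set.Icc ε (1 - ε)) :=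
        measure_mono fun z hz => ⟨hz.1, hi ⟨ball_subset_ball htr hz.1, hz.2⟩⟩
    _ ≤ ENNReal.ofReal (2 * t) := hausdorffMeasure_ball_inter_le (Set.image_subset_range _ _) x t

end SeparatedPieces

section UpperBound

/-- The midpoints `(j + 1/2) / k`, `j < k`, of the `k` equal subintervals of `[0, 1]`. These are the
optimal `k`-means of the uniform distribution on `[0, 1]`. -/
def gridMidpoints (k : ℕ) : Set ℝ :=
  (fun j : ℕ => (j + 1 / 2 : ℝ) / k) '' (Finset.range k : Set ℕ)

lemma finite_gridMidpoints (k : ℕ) : (gridMidpoints k).Finite :=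
  (Finset.finite_toSet _).image _

lemma gridMidpoints_nonempty {k : ℕ} (hk : 0 < k) : (gridMidpoints k).Nonempty :=
  ⟨_, 0, by simpa using hk, rfl⟩

lemma ncard_gridMidpoints_le (k : ℕ) : (gridMidpoints k).ncard ≤ k := by
  refine (Set.ncard_image_le (Finset.finite_toSet _)).trans ?_
  rw [Set.ncard_coe_finset, Finset.card_range]

lemma integral_sq_sub_midpoint (u h : ℝ) :
    ∫ t in u..u + h, (t - (u + h / 2)) ^ 2 = h ^ 3 / 12 := by
  rw [intervalIntegral.integral_comp_sub_right (fun t => t ^ 2), integral_pow]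
  ring

lemma integral_infDist_gridMidpoints_sq_le_of_lt {k j : ℕ} (hj : j < k) :
    ∫ t in (j / k : ℝ)..((j + 1 : ℕ) / k : ℝ), infDist t (gridMidpoints k) ^ 2 ≤
      (1 / k) ^ 3 / 12 := by
  have hright : ((j + 1 : ℕ) / k : ℝ) = j / k + 1 / k := by push_cast; ring
  rw [hright, ← integral_sq_sub_midpoint (j / k : ℝ) (1 / k)]
  refine intervalIntegral.integral_mono_on (le_add_of_nonneg_right (by positivity))
    (Continuous.intervalIntegrable (by fun_prop) _ _)
    (Continuous.intervalIntegrable (by fun_prop) _ _) fun t _ => ?_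
  have hmem : (j / k + 1 / k / 2 : ℝ) ∈ gridMidpoints k :=
    ⟨j, by simpa using hj, by ring⟩
  rw [← sq_abs (t - _), ← Real.dist_eq]
  exact pow_le_pow_left₀ infDist_nonneg (infDist_le_dist_of_mem hmem) 2

lemma distortion_gridMidpoints_le {k : ℕ} (hk : 0 < k) :
    distortion (volume.restrict (Set.Icc 0 1)) (gridMidpoints k) ≤
      ENNReal.ofReal (1 / (12 * k ^ 2)) := by
  have hk₀ : (k : ℝ) ≠ 0 := by positivity
  have hcont : Continuous fun t : ℝ => infDist t (gridMidpoints k) ^ 2 := by fun_prop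
  rw [distortion, ← ofReal_integral_eq_lintegral_ofReal hcont.integrableOn_Icc
    (.of_forall fun t => sq_nonneg _), integral_Icc_eq_integral_Ioc,
    ← intervalIntegral.integral_of_le zero_le_one]
  refine ENNReal.ofReal_le_ofReal ?_
  calc ∫ t in (0 : ℝ)..1, infDist t (gridMidpoints k) ^ 2
      = ∑ j ∈ Finset.range k,
          ∫ t in (j / k : ℝ)..((j + 1 : ℕ) / k : ℝ), infDist t (gridMidpoints k) ^ 2 := by
        rw [intervalIntegral.sum_integral_adjacent_intervals (a := fun j : ℕ => (j / k : ℝ))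
          fun _ _ => hcont.intervalIntegrable _ _, Nat.cast_zero, zero_div, div_self hk₀]
    _ ≤ (Finset.range k).card • ((1 / k : ℝ) ^ 3 / 12) :=
        Finset.sum_le_card_nsmul _ _ _ fun j hj =>
          integral_infDist_gridMidpoints_sq_le_of_lt (Finset.mem_range.1 hj)
    _ = 1 / (12 * k ^ 2) := by
        rw [Finset.card_range, nsmul_eq_mul]
        field_simp

lemma infDist_image_le_of_lipschitzWith {X Y : Type*} [PseudoMetricSpace X] [PseudoMetricSpace Y]
    {f : X → Y} {K : ℝ≥0} (hf : LipschitzWith K f) {s : Set X} (hs : s.Nonempty) (x : X) :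
    infDist (f x) (f '' s) ≤ K * infDist x s := by
  have := hs.to_subtype
  rw [infDist_eq_iInf (s := s), Real.mul_iInf_of_nonneg K.coe_nonneg]
  exact le_ciInf fun y =>
    (infDist_le_dist_of_mem (Set.mem_image_of_mem f y.2)).trans (hf.dist_le_mul x y)

variable {E : Type*} [NormedAddCommGroup E] [NormedSpace ℝ E] [MeasurableSpace E] [BorelSpace E]

lemma distortion_restrict_segment_lineMap_image_le (x y : E) {s : Set ℝ} (hs : s.Nonempty) :
    distortion (μH[1].restrict (segment ℝ x y)) (lineMap x y '' s) ≤
      ENNReal.ofReal (dist x y ^ 3) * distortion (volume.restrict (Set.Icc 0 1)) s := by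
  have hscale (t : ℝ) : ENNReal.ofReal (infDist (lineMap x y t) (lineMap x y '' s) ^ 2) ≤
      ENNReal.ofReal (dist x y ^ 2) * ENNReal.ofReal (infDist t s ^ 2) := by
    rw [← ENNReal.ofReal_mul (by positivity), ← mul_pow]
    gcongr
    · exact infDist_nonneg
    · exact infDist_image_le_of_lipschitzWith (lipschitzWith_lineMap x y) hs t
  have hmeas : Measurable fun z : E => ENNReal.ofReal (infDist z (lineMap x y '' s) ^ 2) :=
    (measurable_infDist.pow_const 2).ennreal_ofReal
  rw [hausdorffMeasure_restrict_segment, distortion, lintegral_smul_measure,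
    lintegral_map hmeas AffineMap.lineMap_continuous.measurable, ENNReal.smul_def, smul_eq_mul]
  calc (nndist x y : ℝ≥0∞) * ∫⁻ t in Set.Icc (0 : ℝ) 1,
        ENNReal.ofReal (infDist (lineMap x y t) (lineMap x y '' s) ^ 2)
      ≤ nndist x y * ∫⁻ t in Set.Icc (0 : ℝ) 1,
          ENNReal.ofReal (dist x y ^ 2) * ENNReal.ofReal (infDist t s ^ 2) := by
        gcongr with t
        exact hscale t
    _ = ENNReal.ofReal (dist x y ^ 3) * distortion (volume.restrict (Set.Icc 0 1)) s := by
        rw [lintegral_const_mul' _ _ ENNReal.ofReal_ne_top, ← mul_assoc,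
          ← ENNReal.ofReal_coe_nnreal, coe_nndist, ← ENNReal.ofReal_mul dist_nonneg, distortion]
        ring_nf

lemma distortion_restrict_segment_gridMidpoints_le (x y : E) {k : ℕ} (hk : 0 < k) :
    distortion (μH[1].restrict (segment ℝ x y)) (lineMap x y '' gridMidpoints k) ≤
      ENNReal.ofReal (dist x y ^ 3 / (12 * k ^ 2)) := by
  refine (distortion_restrict_segment_lineMap_image_le x y (gridMidpoints_nonempty hk)).trans ?_
  rw [div_eq_mul_one_div, ENNReal.ofReal_mul (by positivity)]
  gcongr
  exact distortion_gridMidpoints_le hk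

lemma distortion_restrict_iUnion_segment_gridMidpoints_le {ι : Type*} [Fintype ι] (a b : ι → E)
    {k : ι → ℕ} (hk : ∀ i, 0 < k i) :
    distortion (μH[1].restrict (⋃ i, segment ℝ (a i) (b i)))
        (⋃ i, lineMap (a i) (b i) '' gridMidpoints (k i)) ≤
      ENNReal.ofReal (∑ i, dist (a i) (b i) ^ 3 / (12 * k i ^ 2)) := by
  rw [ENNReal.ofReal_sum_of_nonneg fun i _ => by positivity]
  refine (distortion_restrict_iUnion_le _ _ _).trans (Finset.sum_le_sum fun i _ => ?_)
  exact (distortion_anti ((gridMidpoints_nonempty (hk i)).image _)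
    (Set.subset_iUnion (fun i => lineMap (a i) (b i) '' gridMidpoints (k i)) i) _).trans
      (distortion_restrict_segment_gridMidpoints_le _ _ (hk i))

end UpperBound

section SegmentUnion

variable {ι : Type*} [Fintype ι]

section NormedSpace

variable {E : Type*} [NormedAddCommGroup E] [NormedSpace ℝ E] [MeasurableSpace E] [BorelSpace E]
  {a b : ι → E}

lemma hausdorffMeasure_iUnion_segment (hab : ∀ i, a i ≠ b i)
    (hdisj : Pairwise (Function.onFun Disjoint fun i => openSegment ℝ (a i) (b i))) :
    μH[1] (⋃ i, segment ℝ (a i) (b i)) = ENNReal.ofReal (∑ i, dist (a i) (b i)) := by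
  have hsum : ENNReal.ofReal (∑ i, dist (a i) (b i)) = ∑ i, edist (a i) (b i) := by
    simp_rw [ENNReal.ofReal_sum_of_nonneg fun _ _ => dist_nonneg, edist_dist]
  rw [hsum]
  apply le_antisymm
  · refine (measure_iUnion_le _).trans_eq ?_
    simp_rw [tsum_fintype, hausdorffMeasure_segment]
  · calc ∑ i, edist (a i) (b i) = μH[1] (⋃ i, openSegment ℝ (a i) (b i)) := by
          simp_rw [measure_iUnion hdisj fun i => measurableSet_openSegment (hab i), tsum_fintype,
            hausdorffMeasure_openSegment]
      _ ≤ μH[1] (⋃ i, segment ℝ (a i) (b i)) :=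
          measure_mono (Set.iUnion_mono fun i => openSegment_subset_segment ℝ _ _)

lemma hausdorffMeasure_iUnion_trimmed {ε : ℝ} (hε : 0 < ε) (hε' : ε ≤ 1 / 2)
    (hdisj : Pairwise (Function.onFun Disjoint fun i => openSegment ℝ (a i) (b i))) :
    μH[1] (⋃ i, lineMap (a i) (b i) '' Set.Icc ε (1 - ε)) =
      ENNReal.ofReal ((1 - 2 * ε) * ∑ i, dist (a i) (b i)) := by
  rw [measure_iUnion, tsum_fintype, Finset.mul_sum, ENNReal.ofReal_sum_of_nonneg]
  · refine Finset.sum_congr rfl fun i _ => ?_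
    rw [hausdorffMeasure_lineMap_image_Icc]
    ring_nf
  · exact fun i _ => mul_nonneg (by linarith) dist_nonneg
  · exact fun i j hij => (hdisj hij).mono (lineMap_image_Icc_subset_openSegment _ _ hε)
      (lineMap_image_Icc_subset_openSegment _ _ hε)
  · exact fun i => (isCompact_Icc.image AffineMap.lineMap_continuous).measurableSet

lemma eventually_ofReal_le_distortion_restrict_iUnion_segment [Nonempty ι] {ε : ℝ} (hε : 0 < ε)
    (hε' : ε ≤ 1 / 2)
    (hdisj : Pairwise (Function.onFun Disjoint fun i => openSegment ℝ (a i) (b i))) :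
    ∀ᶠ n : ℕ in atTop, ∀ α : Set E, α.Finite → α.Nonempty → α.ncard ≤ n →
      ENNReal.ofReal (((1 - 2 * ε) * ∑ i, dist (a i) (b i)) ^ 3 / (12 * n ^ 2)) ≤
        distortion (μH[1].restrict (⋃ i, segment ℝ (a i) (b i))) α := by
  obtain ⟨r, hr, hball⟩ := exists_hausdorffMeasure_ball_inter_iUnion_trimmed_le hε hdisj
  set m := (1 - 2 * ε) * ∑ i, dist (a i) (b i)
  have hm₀ : 0 ≤ m := mul_nonneg (by linarith) (Finset.sum_nonneg fun i _ => dist_nonneg)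
  have hradius : ∀ᶠ n : ℕ in atTop, m / (2 * n) ≤ r := by
    have hlim : Tendsto (fun n : ℕ => m / (2 * n)) atTop (𝓝 0) :=
      (tendsto_natCast_atTop_atTop.const_mul_atTop two_pos).const_div_atTop m
    exact hlim.eventually_le_const hr
  filter_upwards [hradius, eventually_gt_atTop 0] with n hnr hn α hα hne hcard
  have htrim : ⋃ i, lineMap (a i) (b i) '' Set.Icc ε (1 - ε) ⊆ ⋃ i, segment ℝ (a i) (b i) :=
    Set.iUnion_mono fun i => (lineMap_image_Icc_subset_openSegment _ _ hε).trans
      (openSegment_subset_segment ℝ _ _)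
  refine le_trans ?_ (distortion_restrict_mono htrim _ α)
  rw [show 12 * (n : ℝ) ^ 2 = 3 * (2 * n) ^ 2 by ring]
  refine ofReal_le_distortion_of_measure_ball_le hα hne hn hcard two_pos hm₀ ?_ fun x _ t ht => ?_
  · rw [Measure.restrict_apply_univ, hausdorffMeasure_iUnion_trimmed hε hε' hdisj]
  · rw [Measure.restrict_apply measurableSet_ball]
    exact hball x t (ht.trans hnr)

lemma toReal_distortion_cond_iUnion_segment (hab : ∀ i, a i ≠ b i)
    (hdisj : Pairwise (Function.onFun Disjoint fun i => openSegment ℝ (a i) (b i))) (α : Set E) :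
    (distortion (ProbabilityTheory.cond μH[1] (⋃ i, segment ℝ (a i) (b i))) α).toReal =
      (distortion (μH[1].restrict (⋃ i, segment ℝ (a i) (b i))) α).toReal /
        ∑ i, dist (a i) (b i) := by
  rw [ProbabilityTheory.cond, hausdorffMeasure_iUnion_segment hab hdisj, distortion_smul_measure,
    ENNReal.toReal_mul, ENNReal.toReal_inv,
    ENNReal.toReal_ofReal (Finset.sum_nonneg fun i _ => dist_nonneg), inv_mul_eq_div]

end NormedSpace

variable {a b : ι → E2}

lemma quantErr_cond_iUnion_segment_le [Nonempty ι] (hab : ∀ i, a i ≠ b i)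
    (hdisj : Pairwise (Function.onFun Disjoint fun i => openSegment ℝ (a i) (b i)))
    {k : ι → ℕ} (hk : ∀ i, 0 < k i) {n : ℕ} (hkn : ∑ i, k i ≤ n) :
    quantErr (ProbabilityTheory.cond μH[1] (⋃ i, segment ℝ (a i) (b i))) n ≤
      (∑ i, dist (a i) (b i) ^ 3 / (12 * k i ^ 2)) / ∑ i, dist (a i) (b i) := by
  set α : Set E2 := ⋃ i, lineMap (a i) (b i) '' gridMidpoints (k i)
  have hα : α.Finite := Set.finite_iUnion fun i => (finite_gridMidpoints (k i)).image _
  have hne : α.Nonempty :=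
    Set.nonempty_iUnion.2 ⟨Classical.arbitrary ι, (gridMidpoints_nonempty (hk _)).image _⟩
  have hcard : α.ncard ≤ n :=
    calc α.ncard ≤ ∑ i, (lineMap (a i) (b i) '' gridMidpoints (k i)).ncard :=
          Set.ncard_iUnion_le_of_fintype _
      _ ≤ ∑ i, k i := Finset.sum_le_sum fun i _ =>
          (Set.ncard_image_le (finite_gridMidpoints (k i))).trans (ncard_gridMidpoints_le (k i))
      _ ≤ n := hkn
  refine (quantErr_le_toReal_distortion hα hne hcard _).trans ?_
  rw [toReal_distortion_cond_iUnion_segment hab hdisj]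
  gcongr
  exact ENNReal.toReal_le_of_le_ofReal (Finset.sum_nonneg fun i _ => by positivity)
    (distortion_restrict_iUnion_segment_gridMidpoints_le a b hk)

lemma eventually_le_quantErr_cond_iUnion_segment [Nonempty ι] (hab : ∀ i, a i ≠ b i)
    (hdisj : Pairwise (Function.onFun Disjoint fun i => openSegment ℝ (a i) (b i)))
    {ε : ℝ} (hε : 0 < ε) (hε' : ε ≤ 1 / 2) :
    ∀ᶠ n : ℕ in atTop,
      (1 - 2 * ε) ^ 3 * (∑ i, dist (a i) (b i)) ^ 2 / (12 * n ^ 2) ≤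
        quantErr (ProbabilityTheory.cond μH[1] (⋃ i, segment ℝ (a i) (b i))) n := by
  have hlength : 0 < ∑ i, dist (a i) (b i) :=
    Finset.sum_pos (fun i _ => dist_pos.2 (hab i)) Finset.univ_nonempty
  filter_upwards [eventually_ofReal_le_distortion_restrict_iUnion_segment hε hε' hdisj,
    eventually_gt_atTop 0] with n hlower hn
  refine le_quantErr hn fun α hα hne hcard => ?_
  have hfinite : distortion (μH[1].restrict (⋃ i, segment ℝ (a i) (b i))) α ≠ ∞ :=
    distortion_restrict_ne_top_of_isCompact (isCompact_iUnion fun i => isCompact_segment _ _)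
      (hausdorffMeasure_iUnion_segment hab hdisj ▸ ENNReal.ofReal_ne_top) α
  rw [toReal_distortion_cond_iUnion_segment hab hdisj, le_div_iff₀ hlength]
  refine le_trans (le_of_eq ?_)
    ((ENNReal.ofReal_le_iff_le_toReal hfinite).1 (hlower α hα hne hcard))
  ring

lemma tendsto_sq_mul_sum_cube_div_sq_floor {l : ι → ℝ} (hl : ∀ i, 0 < l i) :
    Tendsto (fun n : ℕ => (n : ℝ) ^ 2 *
      ((∑ i, l i ^ 3 / (12 * (⌊l i / (∑ j, l j) * n⌋₊ : ℝ) ^ 2)) / ∑ j, l j)) atTop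
      (𝓝 ((∑ i, l i) ^ 2 / 12)) := by
  rcases isEmpty_or_nonempty ι with _ | _
  · simp
  set S := ∑ j, l j with hS
  have hS₀ : 0 < S := Finset.sum_pos (fun i _ => hl i) Finset.univ_nonempty
  have hterm (i : ι) : Tendsto (fun n : ℕ => l i ^ 3 / (12 * (⌊l i / S * n⌋₊ / n : ℝ) ^ 2) / S)
      atTop (𝓝 (l i * S / 12)) := by
    have hfloor : Tendsto (fun n : ℕ => (⌊l i / S * n⌋₊ / n : ℝ)) atTop (𝓝 (l i / S)) :=
      (tendsto_nat_floor_mul_div_atTop (div_nonneg (hl i).le hS₀.le)).comp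
        tendsto_natCast_atTop_atTop
    have hli := (hl i).ne'
    have hvalue : l i ^ 3 / (12 * (l i / S) ^ 2) / S = l i * S / 12 := by field_simp
    rw [← hvalue]
    exact (tendsto_const_nhds.div ((hfloor.pow 2).const_mul 12) (by positivity)).div_const S
  have hlimit : ∑ i, l i * S / 12 = S ^ 2 / 12 := by
    rw [← Finset.sum_div, ← Finset.sum_mul, ← hS, sq]
  rw [← hlimit]
  refine (tendsto_finsetSum _ fun i _ => hterm i).congr fun n => ?_
  rw [Finset.sum_div, Finset.mul_sum]
  refine Finset.sum_congr rfl fun i _ => ?_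
  rw [div_pow]
  simp only [div_eq_mul_inv, mul_inv, inv_inv]
  ring

lemma sum_floor_div_sum_mul_le {l : ι → ℝ} (hl : ∀ i, 0 ≤ l i) (n : ℕ) :
    ∑ i, ⌊l i / (∑ j, l j) * n⌋₊ ≤ n := by
  have hreal : ∑ i, (⌊l i / (∑ j, l j) * n⌋₊ : ℝ) ≤ n :=
    calc ∑ i, (⌊l i / (∑ j, l j) * n⌋₊ : ℝ)
        ≤ ∑ i, l i / (∑ j, l j) * n := Finset.sum_le_sum fun i _ =>
          Nat.floor_le (by have := Finset.sum_nonneg fun j (_ : j ∈ Finset.univ) => hl j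
                           have := hl i
                           positivity)
      _ = (∑ i, l i) / (∑ j, l j) * n := by rw [Finset.sum_div, Finset.sum_mul]
      _ ≤ n := mul_le_of_le_one_left n.cast_nonneg (div_self_le_one _)
  exact_mod_cast hreal

lemma eventually_floor_mul_pos {c : ℝ} (hc : 0 < c) : ∀ᶠ n : ℕ in atTop, 0 < ⌊c * n⌋₊ :=
  (tendsto_nat_floor_atTop.comp
    (tendsto_natCast_atTop_atTop.const_mul_atTop hc)).eventually_gt_atTop 0

lemma eventually_lt_sq_mul_quantErr [Nonempty ι] (hab : ∀ i, a i ≠ b i)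
    (hdisj : Pairwise (Function.onFun Disjoint fun i => openSegment ℝ (a i) (b i)))
    {c : ℝ} (hc : c < (∑ i, dist (a i) (b i)) ^ 2 / 12) :
    ∀ᶠ n : ℕ in atTop, c < (n : ℝ) ^ 2 *
      quantErr (ProbabilityTheory.cond μH[1] (⋃ i, segment ℝ (a i) (b i))) n := by
  have hlim : Tendsto (fun ε : ℝ => (1 - 2 * ε) ^ 3 * (∑ i, dist (a i) (b i)) ^ 2 / 12)
      (𝓝[>] 0) (𝓝 ((∑ i, dist (a i) (b i)) ^ 2 / 12)) :=
    tendsto_nhdsWithin_of_tendsto_nhds (Continuous.tendsto' (by fun_prop) _ _ (by simp))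
  obtain ⟨ε, hcε, hε, hε'⟩ :=
    ((hlim.eventually_const_lt hc).and (Ioo_mem_nhdsGT (one_half_pos (α := ℝ)))).exists
  filter_upwards [eventually_le_quantErr_cond_iUnion_segment hab hdisj hε hε'.le,
    eventually_gt_atTop 0] with n hlower hn
  refine hcε.trans_le (le_trans (le_of_eq ?_) (mul_le_mul_of_nonneg_left hlower (sq_nonneg _)))
  field_simp

end SegmentUnion

theorem stmt_9_general {ι : Type*} [Fintype ι] [Nonempty ι] {a b : ι → E2} (hab : ∀ i, a i ≠ b i)
    (hdisj : Pairwise (Function.onFun Disjoint fun i => openSegment ℝ (a i) (b i))) :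
    Tendsto (fun n : ℕ => (n : ℝ) ^ 2 *
      quantErr (ProbabilityTheory.cond μH[1] (⋃ i, segment ℝ (a i) (b i))) n) atTop
      (𝓝 ((∑ i, dist (a i) (b i)) ^ 2 / 12)) := by
  set S := ∑ i, dist (a i) (b i)
  have hl (i : ι) : 0 < dist (a i) (b i) := dist_pos.2 (hab i)
  have hS : 0 < S := Finset.sum_pos (fun i _ => hl i) Finset.univ_nonempty
  refine tendsto_order.2 ⟨fun c hc => eventually_lt_sq_mul_quantErr hab hdisj hc, fun c hc => ?_⟩
  filter_upwards [(tendsto_sq_mul_sum_cube_div_sq_floor hl).eventually_lt_const hc,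
    eventually_all.2 fun i => eventually_floor_mul_pos (div_pos (hl i) hS)] with n hn hk
  refine lt_of_le_of_lt (mul_le_mul_of_nonneg_left ?_ (sq_nonneg _)) hn
  exact quantErr_cond_iUnion_segment_le hab hdisj hk
    (sum_floor_div_sum_mul_le (fun i => (hl i).le) n)

section ConvexPolygon

/-- Twice the signed area of the triangle `p q x`: positive when `x` lies strictly to the left of
the line directed from `p` to `q`, and zero on that line. -/
def twiceSignedArea (p q x : E2) : ℝ := (q 0 - p 0) * (x 1 - p 1) - (q 1 - p 1) * (x 0 - p 0)

lemma twiceSignedArea_lineMap (p q x y : E2) (t : ℝ) :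
    twiceSignedArea p q (lineMap x y t) =
      (1 - t) * twiceSignedArea p q x + t * twiceSignedArea p q y := by
  simp only [twiceSignedArea, AffineMap.lineMap_apply_module, PiLp.add_apply, PiLp.smul_apply,
    smul_eq_mul]
  ring

lemma twiceSignedArea_eq_zero_of_mem_openSegment {p q x : E2} (hx : x ∈ openSegment ℝ p q) :
    twiceSignedArea p q x = 0 := by
  rw [openSegment_eq_image_lineMap] at hx
  obtain ⟨t, -, rfl⟩ := hx
  rw [twiceSignedArea_lineMap, twiceSignedArea, twiceSignedArea]
  ring

lemma disjoint_openSegment_of_twiceSignedArea_nonneg {p q x y : E2}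
    (hx : 0 ≤ twiceSignedArea p q x) (hy : 0 ≤ twiceSignedArea p q y)
    (hpos : 0 < twiceSignedArea p q x ∨ 0 < twiceSignedArea p q y) :
    Disjoint (openSegment ℝ p q) (openSegment ℝ x y) := by
  rw [Set.disjoint_left, openSegment_eq_image_lineMap ℝ x y]
  rintro _ hz ⟨t, ⟨ht₀, ht₁⟩, rfl⟩
  have hzero := twiceSignedArea_eq_zero_of_mem_openSegment hz
  rw [twiceSignedArea_lineMap] at hzero
  have ht : 0 < 1 - t := sub_pos.2 ht₁
  rcases hpos with hpos | hpos
  · exact (add_pos_of_pos_of_nonneg (mul_pos ht hpos) (mul_nonneg ht₀.le hy)).ne' hzero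
  · exact (add_pos_of_nonneg_of_pos (mul_nonneg ht.le hx) (mul_pos ht₀ hpos)).ne' hzero

lemma pairwise_disjoint_openSegment_of_twiceSignedArea_pos {n : ℕ} {v : Fin (n + 3) → E2}
    (hv : ∀ i j, j ≠ i → j ≠ i + 1 → 0 < twiceSignedArea (v i) (v (i + 1)) (v j)) :
    Pairwise (Function.onFun Disjoint fun i => openSegment ℝ (v i) (v (i + 1))) := by
  intro i j hij
  have hnonneg (k : Fin (n + 3)) : 0 ≤ twiceSignedArea (v i) (v (i + 1)) (v k) := by
    by_cases hk : k = i ∨ k = i + 1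
    · refine (?_ : _ = _).ge
      rcases hk with rfl | rfl <;> rw [twiceSignedArea] <;> ring
    · exact (hv i k (mt Or.inl hk) (mt Or.inr hk)).le
  refine disjoint_openSegment_of_twiceSignedArea_nonneg (hnonneg j) (hnonneg (j + 1)) ?_
  by_cases hj : j = i + 1
  · right
    refine hv i (j + 1) ?_ (add_left_injective 1 |>.ne hij.symm)
    subst hj
    rw [add_assoc, Ne, add_eq_left]
    exact Fin.ne_of_val_ne (by simp [Fin.val_add, Nat.mod_eq_of_lt])
  · exact .inl (hv i j hij.symm hj)

end ConvexPolygon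

section Hexagon

/-- The vertices `O, A₁, …, A₅` of the hexagon in counterclockwise order; the indices are cyclic,
so the sides are the segments from `hexVertex i` to `hexVertex (i + 1)`. -/
def hexVertex : Fin 6 → E2 :=
  ![pt 0 0, pt 1 0, pt (3/2) (√3/2), pt 1 √3, pt 0 √3, pt (-(1/2)) (√3/2)]

lemma hexL_eq_iUnion_segment : hexL = ⋃ i, segment ℝ (hexVertex i) (hexVertex (i + 1)) := by
  ext x
  simp [hexL, hexVertex, Fin.exists_fin_succ, or_assoc]

lemma dist_hexVertex_add_one (i : Fin 6) : dist (hexVertex i) (hexVertex (i + 1)) = 1 := by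
  rw [EuclideanSpace.dist_eq, Real.sqrt_eq_one, Fin.sum_univ_two, Real.dist_eq, Real.dist_eq,
    sq_abs, sq_abs]
  have hsqrt : √3 ^ 2 = 3 := Real.sq_sqrt (by norm_num)
  fin_cases i <;> simp [hexVertex, pt] <;> linarith

lemma twiceSignedArea_hexVertex_pos (i j : Fin 6) (hi : j ≠ i) (hi' : j ≠ i + 1) :
    0 < twiceSignedArea (hexVertex i) (hexVertex (i + 1)) (hexVertex j) := by
  have hsqrt : 0 < √3 := by positivity
  fin_cases i <;> fin_cases j <;> simp [hexVertex, pt, twiceSignedArea] at hi hi' ⊢ <;> linarith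

lemma hexVertex_ne_add_one (i : Fin 6) : hexVertex i ≠ hexVertex (i + 1) :=
  dist_pos.1 (dist_hexVertex_add_one i ▸ one_pos)

lemma pairwise_disjoint_openSegment_hexVertex : Pairwise (Function.onFun Disjoint
    fun i => openSegment ℝ (hexVertex i) (hexVertex (i + 1))) :=
  pairwise_disjoint_openSegment_of_twiceSignedArea_pos twiceSignedArea_hexVertex_pos

lemma hexP_eq_cond :
    hexP = ProbabilityTheory.cond μH[1] (⋃ i, segment ℝ (hexVertex i) (hexVertex (i + 1))) := by
  have hlength : μH[1] (⋃ i, segment ℝ (hexVertex i) (hexVertex (i + 1))) = 6 := by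
    rw [hausdorffMeasure_iUnion_segment hexVertex_ne_add_one
      pairwise_disjoint_openSegment_hexVertex]
    simp [dist_hexVertex_add_one]
  rw [hexP, hexL_eq_iUnion_segment, ProbabilityTheory.cond, hlength]

end Hexagon

/-- The one-dimensional quantization coefficient of the uniform distribution on
the hexagon boundary exists and equals `3`: `lim_{n→∞} n² Vₙ(P) = 3`. -/
theorem stmt_9 :
    Tendsto (fun n : ℕ => (n : ℝ) ^ 2 * quantErr hexP n) atTop (nhds 3) := by
  rw [hexP_eq_cond]
  convert stmt_9_general hexVertex_ne_add_one pairwise_disjoint_openSegment_hexVertex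
  norm_num [dist_hexVertex_add_one]
end
end

section
/- Let 0 ≤ α < β ≤ 2π, let S = {(cos θ, sin θ) : α ≤ θ ≤ β} be a unit circular arc, and let P be the uniform probability distribution on S. Then for every n ∈ ℕ the set αₙ = { (2n/(β−α)) sin((β−α)/(2n)) · (cos(α + (2j−1)(β−α)/(2n)), sin(α + (2j−1)(β−α)/(2n))) : j = 1, 2, …, n } forms an optimal set of n-means for P, and the corresponding quantization error is Vₙ(P) = 1 − (4n²/(β−α)²) sin²((β−α)/(2n)). -/
open MeasureTheory Real Filter
open scoped ENNReal

noncomputable section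

/-- The arc `{(cos θ, sin θ) : a ≤ θ ≤ b}` of the unit circle. -/
def arcS (a b : ℝ) : Set E2 :=
  {p | ∃ θ : ℝ, a ≤ θ ∧ θ ≤ b ∧ p = pt (Real.cos θ) (Real.sin θ)}

/-- The uniform probability distribution on the arc `arcS a b`: density
`1/(b-a)` with respect to one-dimensional Hausdorff (arc-length) measure. -/
def arcP (a b : ℝ) : Measure E2 :=
  (ENNReal.ofReal (b - a))⁻¹ • (μH[1] : Measure E2).restrict (arcS a b)

/-!
Parametrizing the unit circle by arc length turns the distortion of a finite set into an integral
over `[a, b]`, once the one-dimensional Hausdorff measure on the arc is identified with the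
push-forward of Lebesgue measure.

Let `A ⊆ [a, b]` have measure `t`. By the bathtub principle `∫ u in A, cos (u - φ)` is at most
`2 sin (t / 2)`, so serving the part of the arc over `A` by a single point costs at least
`t - 2 M(t)`, where `M(t) = (1 - cos t) / t`, with equality for an interval and its centroid.
Splitting the arc into the Voronoi cells of `n` points, of measures `tᵢ` with sum `b - a`, it
remains to bound `∑ M(tᵢ)` by `n M((b - a) / n)`. As `M` is concave only near `0`, Jensen's
inequality is replaced by the tangent line of `M` at `(b - a) / n`: for `n ≥ 2` this point is at
most `π`, and then the line dominates `M` on all of `[0, 2π]`.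
-/

/-- The point of the plane with polar coordinates `(r, θ)`; `polarPt 1` is the arc-length
parametrization of the unit circle. The radius may be any real number. -/
def polarPt (r θ : ℝ) : E2 := pt (r * cos θ) (r * sin θ)

lemma exists_eq_polarPt (c : E2) : ∃ r θ, 0 ≤ r ∧ c = polarPt r θ := by
  refine ⟨‖(⟨c 0, c 1⟩ : ℂ)‖, Complex.arg ⟨c 0, c 1⟩, norm_nonneg _, ?_⟩
  rw [polarPt, Complex.norm_mul_cos_arg, Complex.norm_mul_sin_arg]
  ext i
  fin_cases i <;> simp [pt]

lemma dist_polarPt_sq (r s ρ t : ℝ) :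
    dist (polarPt r s) (polarPt ρ t) ^ 2 = r ^ 2 + ρ ^ 2 - 2 * r * ρ * cos (s - t) := by
  simp only [dist_eq_norm, polarPt, pt, EuclideanSpace.norm_sq_eq, Fin.sum_univ_two, PiLp.sub_apply,
    Matrix.cons_val_zero, Matrix.cons_val_one, Real.norm_eq_abs, sq_abs, cos_sub]
  linear_combination r ^ 2 * sin_sq_add_cos_sq s + ρ ^ 2 * sin_sq_add_cos_sq t

lemma continuous_polarPt (r : ℝ) : Continuous (polarPt r) := by
  unfold polarPt pt
  fun_prop

lemma one_sub_cos_eq (t : ℝ) : 1 - cos t = 2 * sin (t / 2) ^ 2 := by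
  rw [sin_sq_eq_half_sub, mul_div_cancel₀ t two_ne_zero]
  ring

lemma dist_polarPt_one (s t : ℝ) :
    dist (polarPt 1 s) (polarPt 1 t) = 2 * |sin ((s - t) / 2)| := by
  rw [← sq_eq_sq₀ dist_nonneg (by positivity), dist_polarPt_sq, mul_pow, sq_abs]
  linear_combination 2 * one_sub_cos_eq (s - t)

lemma lipschitzWith_polarPt_one : LipschitzWith 1 (polarPt 1) := by
  refine LipschitzWith.of_dist_le_mul fun s t => ?_
  have hsin : |sin ((s - t) / 2)| ≤ |s - t| / 2 := by
    simpa [abs_div] using abs_sin_le_abs (x := (s - t) / 2)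
  rw [dist_polarPt_one, Real.dist_eq, NNReal.coe_one]
  linarith

lemma abs_sub_le_mul_dist_polarPt_one {s t : ℝ} (h : |s - t| ≤ π) :
    |s - t| ≤ π / 2 * dist (polarPt 1 s) (polarPt 1 t) := by
  have hhalf : |(s - t) / 2| = |s - t| / 2 := by rw [abs_div, abs_two]
  have hjordan := mul_abs_le_abs_sin (x := (s - t) / 2) (by rw [hhalf]; linarith)
  rw [dist_polarPt_one]
  calc |s - t| = π * (2 / π * |(s - t) / 2|) := by rw [hhalf]; field_simp
    _ ≤ π * |sin ((s - t) / 2)| := by gcongr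
    _ = π / 2 * (2 * |sin ((s - t) / 2)|) := by ring

lemma mul_le_sin_of_le_one_sub {r x : ℝ} (hr : 0 ≤ r) (hx : 0 ≤ x) (hxr : x ≤ 1 - r) :
    r * x ≤ sin x := by
  rcases hx.eq_or_lt with rfl | hx
  · simp
  have hsq : x ^ 2 ≤ 1 - r := by nlinarith
  nlinarith [sin_gt_sub_cube hx, hsq]

lemma mul_abs_sub_le_dist_polarPt_one {r s t : ℝ} (hr : 0 ≤ r) (h : |s - t| ≤ 1 - r) :
    r * |s - t| ≤ dist (polarPt 1 s) (polarPt 1 t) := by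
  have hhalf : |(s - t) / 2| = |s - t| / 2 := by rw [abs_div, abs_two]
  have hsin : r * |(s - t) / 2| ≤ |sin ((s - t) / 2)| := by
    refine (mul_le_sin_of_le_one_sub hr (abs_nonneg _) ?_).trans ?_
    · rw [hhalf]
      linarith [abs_nonneg (s - t)]
    · rcases abs_choice ((s - t) / 2) with habs | habs <;> rw [habs]
      · exact le_abs_self _
      · rw [sin_neg]
        exact neg_le_abs _
  rw [hhalf] at hsin
  rw [dist_polarPt_one]
  linarith

lemma mul_volume_preimage_polarPt_one_le_ediam {r c : ℝ} {s : Set E2} (hr₀ : 0 < r) (hr₁ : r < 1)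
    (hc : polarPt 1 c ∈ s) (hs : Metric.ediam s ≤ ENNReal.ofReal ((1 - r) / π)) :
    ENNReal.ofReal r * volume (polarPt 1 ⁻¹' s ∩ Set.Ioc (c - π) (c - π + 2 * π)) ≤
      Metric.ediam s := by
  set T := polarPt 1 ⁻¹' s ∩ Set.Ioc (c - π) (c - π + 2 * π)
  have dist_le {x y : E2} (hx : x ∈ s) (hy : y ∈ s) : dist x y ≤ (1 - r) / π :=
    (edist_le_ofReal (div_nonneg (by linarith) pi_pos.le)).1
      ((Metric.edist_le_ediam_of_mem hx hy).trans hs)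
  have abs_sub_center_le {t : ℝ} (ht : t ∈ T) : |t - c| ≤ (1 - r) / 2 := by
    have htπ : |t - c| ≤ π := abs_le.2 ⟨by linarith [ht.2.1], by linarith [ht.2.2]⟩
    calc |t - c| ≤ π / 2 * dist (polarPt 1 t) (polarPt 1 c) :=
          abs_sub_le_mul_dist_polarPt_one htπ
      _ ≤ π / 2 * ((1 - r) / π) := by gcongr; exact dist_le ht.1 hc
      _ = (1 - r) / 2 := by field_simp
  have ediam_le : Metric.ediam T ≤ Metric.ediam s / ENNReal.ofReal r := by
    refine Metric.ediam_le fun x hx y hy => ?_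
    have hxy : |x - y| ≤ 1 - r := by
      linarith [abs_sub_le x c y, abs_sub_comm c y, abs_sub_center_le hx, abs_sub_center_le hy]
    rw [ENNReal.le_div_iff_mul_le (Or.inl (by simpa using hr₀)) (Or.inl ENNReal.ofReal_ne_top),
      edist_dist, Real.dist_eq, ← ENNReal.ofReal_mul (abs_nonneg _), mul_comm]
    calc ENNReal.ofReal (r * |x - y|)
        ≤ edist (polarPt 1 x) (polarPt 1 y) := by
          rw [edist_dist]
          exact ENNReal.ofReal_le_ofReal (mul_abs_sub_le_dist_polarPt_one hr₀.le hxy)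
      _ ≤ Metric.ediam s := Metric.edist_le_ediam_of_mem hx.1 hy.1
  rw [mul_comm]
  exact ENNReal.mul_le_of_le_div ((Real.volume_le_diam T).trans ediam_le)

lemma periodic_polarPt (r : ℝ) : Function.Periodic (polarPt r) (2 * π) := fun θ => by
  simp only [polarPt, cos_add_two_pi, sin_add_two_pi]

lemma volume_preimage_inter_Ioc_eq_of_periodic {X : Type*} [MeasurableSpace X] {f : ℝ → X} {T : ℝ}
    (hf : Function.Periodic f T) (hfm : Measurable f) (hT : 0 < T) {s : Set X}
    (hs : MeasurableSet s) (a b : ℝ) :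
    volume (f ⁻¹' s ∩ Set.Ioc a (a + T)) = volume (f ⁻¹' s ∩ Set.Ioc b (b + T)) := by
  refine (isAddFundamentalDomain_Ioc hT a).measure_set_eq (isAddFundamentalDomain_Ioc hT b)
    (hfm hs) ?_
  rintro ⟨_, k, rfl⟩
  ext x
  simp only [Set.mem_preimage, AddSubgroup.vadd_def, vadd_eq_add, add_comm, hf.zsmul k x]

lemma map_polarPt_one_le_hausdorffMeasure (a : ℝ) :
    (volume.restrict (Set.Ioc a (a + 2 * π))).map (polarPt 1) ≤ μH[1] := by
  have hm : Measurable (polarPt 1) := (continuous_polarPt 1).measurable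
  set ν := (volume.restrict (Set.Ioc a (a + 2 * π))).map (polarPt 1)
  have smul_le (r : ℝ) (hr₀ : 0 < r) (hr₁ : r < 1) : ENNReal.ofReal r • ν ≤ μH[1] := by
    refine Measure.le_hausdorffMeasure 1 _ (ENNReal.ofReal ((1 - r) / π))
      (ENNReal.ofReal_pos.2 (div_pos (by linarith) pi_pos)) fun s hs => ?_
    rw [ENNReal.rpow_one, ← Metric.ediam_closure s]
    rw [← Metric.ediam_closure s] at hs
    refine (measure_mono subset_closure).trans ?_
    have hcl : MeasurableSet (closure s) := isClosed_closure.measurableSet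
    rw [Measure.smul_apply, smul_eq_mul, Measure.map_apply hm hcl,
      Measure.restrict_apply (hm hcl)]
    rcases (polarPt 1 ⁻¹' closure s).eq_empty_or_nonempty with hempty | ⟨c, hc⟩
    · simp [hempty]
    · rw [volume_preimage_inter_Ioc_eq_of_periodic (periodic_polarPt 1) hm two_pi_pos hcl a (c - π)]
      exact mul_volume_preimage_polarPt_one_le_ediam hr₀ hr₁ hc hs
  refine Measure.le_iff.2 fun B _ => ENNReal.le_of_forall_lt_one_mul_le fun x hx => ?_
  rcases eq_or_ne x 0 with rfl | hx₀
  · simp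
  have hx' : ENNReal.ofReal x.toReal = x := ENNReal.ofReal_toReal hx.ne_top
  rw [← hx', ← smul_eq_mul, ← Measure.smul_apply]
  exact smul_le _ (ENNReal.toReal_pos hx₀ hx.ne_top)
    ((ENNReal.toReal_lt_toReal hx.ne_top ENNReal.one_ne_top).2 hx) B

lemma arcS_eq_image_polarPt_one (a b : ℝ) : arcS a b = polarPt 1 '' Set.Icc a b := by
  ext p
  simp only [arcS, polarPt, one_mul, Set.mem_ofPred_eq, Set.mem_image, Set.mem_Icc, and_assoc,
    eq_comm]

lemma hausdorffMeasure_restrict_arcS {a b : ℝ} (h : b - a ≤ 2 * π) :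
    (μH[1] : Measure E2).restrict (arcS a b) =
      (volume.restrict (Set.Icc a b)).map (polarPt 1) := by
  have hm : Measurable (polarPt 1) := (continuous_polarPt 1).measurable
  ext B hB
  rw [Measure.map_apply hm hB, Measure.restrict_apply (hm hB), Measure.restrict_apply hB,
    arcS_eq_image_polarPt_one]
  apply le_antisymm
  · rw [← Set.image_preimage_inter]
    simpa [hausdorffMeasure_real] using
      lipschitzWith_polarPt_one.hausdorffMeasure_image_le zero_le_one
        (polarPt 1 ⁻¹' B ∩ Set.Icc a b)
  · have harc : MeasurableSet (polarPt 1 '' Set.Icc a b) :=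
      (isCompact_Icc.image (continuous_polarPt 1)).measurableSet
    calc volume (polarPt 1 ⁻¹' B ∩ Set.Icc a b)
        = volume (polarPt 1 ⁻¹' B ∩ Set.Ioc a b) :=
          measure_congr ((ae_eq_refl _).inter Ioc_ae_eq_Icc.symm)
      _ ≤ volume (polarPt 1 ⁻¹' (B ∩ polarPt 1 '' Set.Icc a b) ∩ Set.Ioc a (a + 2 * π)) :=
          measure_mono fun t ht => ⟨⟨ht.1, t, Set.Ioc_subset_Icc_self ht.2, rfl⟩,
            Set.Ioc_subset_Ioc_right (by linarith) ht.2⟩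
      _ ≤ μH[1] (B ∩ polarPt 1 '' Set.Icc a b) := by
          rw [← Measure.restrict_apply (hm (hB.inter harc)), ← Measure.map_apply hm (hB.inter harc)]
          exact map_polarPt_one_le_hausdorffMeasure a _

lemma integral_arcP {a b : ℝ} (hab : a ≤ b) (h : b - a ≤ 2 * π) {f : E2 → ℝ} (hf : Continuous f) :
    ∫ x, f x ∂arcP a b = (b - a)⁻¹ * ∫ u in Set.Icc a b, f (polarPt 1 u) := by
  rw [arcP, hausdorffMeasure_restrict_arcS h, integral_smul_measure,
    integral_map (continuous_polarPt 1).aemeasurable hf.aestronglyMeasurable, ENNReal.toReal_inv,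
    ENNReal.toReal_ofReal (sub_nonneg.2 hab), smul_eq_mul]

lemma le_tangent_of_concaveOn {S : Set ℝ} {f : ℝ → ℝ} {f' x y : ℝ} (hf : ConcaveOn ℝ S f)
    (hx : x ∈ S) (hy : y ∈ S) (hf' : HasDerivAt f f' y) : f x ≤ f y + f' * (x - y) := by
  rcases lt_trichotomy x y with hxy | rfl | hxy
  · have := hf.le_slope_of_hasDerivAt hx hy hxy hf'
    rw [slope_def_field, le_div_iff₀ (sub_pos.2 hxy)] at this
    linarith
  · simp
  · have := hf.slope_le_of_hasDerivAt hy hx hxy hf'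
    rw [slope_def_field, div_le_iff₀ (sub_pos.2 hxy)] at this
    linarith

lemma sum_le_card_mul_of_le_tangent {ι : Type*} {s : Finset ι} {f : ℝ → ℝ} {t : ι → ℝ} {m f' : ℝ}
    (hmean : ∑ i ∈ s, t i = s.card * m)
    (htangent : ∀ i ∈ s, f (t i) ≤ f m + f' * (t i - m)) :
    ∑ i ∈ s, f (t i) ≤ s.card * f m :=
  calc ∑ i ∈ s, f (t i) ≤ ∑ i ∈ s, (f m + f' * (t i - m)) := Finset.sum_le_sum htangent
    _ = s.card * f m + f' * (∑ i ∈ s, t i - s.card * m) := by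
      simp only [Finset.sum_add_distrib, ← Finset.mul_sum, Finset.sum_sub_distrib,
        Finset.sum_const, nsmul_eq_mul]
    _ = s.card * f m := by rw [hmean, sub_self, mul_zero, add_zero]

/-- The mean value of `sin` on `[0, t]`, equal to `(1 - cos t) / t` for `t ≠ 0`. Written as an
integral over `[0, 1]`, it inherits concavity from `sin` and needs no case distinction at `0`. -/
def meanSin (t : ℝ) : ℝ := ∫ s in (0 : ℝ)..1, sin (t * s)

/-- The derivative of `meanSin`, in the form obtained by differentiating under the integral sign;
it is the slope of the supporting lines of `meanSin`. -/
def meanSinDeriv (t : ℝ) : ℝ := ∫ s in (0 : ℝ)..1, s * cos (t * s)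

lemma mul_meanSin (t : ℝ) : t * meanSin t = 2 * sin (t / 2) ^ 2 := by
  rw [meanSin, intervalIntegral.mul_integral_comp_mul_left, integral_sin, mul_zero, mul_one,
    cos_zero, one_sub_cos_eq]

lemma meanSin_eq_div {t : ℝ} (ht : t ≠ 0) : meanSin t = 2 * sin (t / 2) ^ 2 / t := by
  rw [← mul_meanSin, mul_div_cancel_left₀ _ ht]

lemma mul_meanSinDeriv (t : ℝ) : t * meanSinDeriv t = sin t - meanSin t := by
  have hsin (s : ℝ) : HasDerivAt (fun s => sin (t * s)) (t * cos (t * s)) s := by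
    simpa [mul_comm] using ((hasDerivAt_id s).const_mul t).sin
  have hparts := intervalIntegral.integral_mul_deriv_eq_deriv_mul (a := 0) (b := 1)
    (fun s _ => hasDerivAt_id s) (fun s _ => hsin s)
    (Continuous.intervalIntegrable (by fun_prop) _ _)
    (Continuous.intervalIntegrable (by fun_prop) _ _)
  simp only [id, one_mul, mul_one, zero_mul, sub_zero] at hparts
  rw [meanSinDeriv, meanSin, ← hparts, ← intervalIntegral.integral_const_mul]
  exact intervalIntegral.integral_congr fun s _ => by ring

lemma meanSin_pi : meanSin π = 2 / π := by
  rw [meanSin_eq_div pi_ne_zero, sin_pi_div_two]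
  ring

lemma meanSinDeriv_pi : meanSinDeriv π = -2 / π ^ 2 := by
  have h := mul_meanSinDeriv π
  rw [sin_pi, meanSin_pi] at h
  field_simp at h ⊢
  linarith

lemma meanSinDeriv_antitoneOn : AntitoneOn meanSinDeriv (Set.Icc 0 π) := by
  intro x hx y hy hxy
  refine intervalIntegral.integral_mono_on zero_le_one
    (Continuous.intervalIntegrable (by fun_prop) _ _)
    (Continuous.intervalIntegrable (by fun_prop) _ _) fun s hs => ?_
  refine mul_le_mul_of_nonneg_left (cos_le_cos_of_nonneg_of_le_pi ?_ ?_ ?_) hs.1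
  · exact mul_nonneg hx.1 hs.1
  · exact (mul_le_of_le_one_right hy.1 hs.2).trans hy.2
  · exact mul_le_mul_of_nonneg_right hxy hs.1

lemma meanSin_le_tangent_of_le_pi {h t : ℝ} (hh : h ∈ Set.Icc 0 π) (ht : t ∈ Set.Icc 0 π) :
    meanSin t ≤ meanSin h + meanSinDeriv h * (t - h) := by
  rw [meanSin, meanSin, meanSinDeriv, ← intervalIntegral.integral_mul_const,
    ← intervalIntegral.integral_add (Continuous.intervalIntegrable (by fun_prop) _ _)
      (Continuous.intervalIntegrable (by fun_prop) _ _)]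
  refine intervalIntegral.integral_mono_on zero_le_one
    (Continuous.intervalIntegrable (by fun_prop) _ _)
    (Continuous.intervalIntegrable (by fun_prop) _ _) fun s hs => ?_
  have mul_mem {x : ℝ} (hx : x ∈ Set.Icc 0 π) : x * s ∈ Set.Icc 0 π :=
    ⟨mul_nonneg hx.1 hs.1, (mul_le_of_le_one_right hx.1 hs.2).trans hx.2⟩
  have hsin := le_tangent_of_concaveOn strictConcaveOn_sin_Icc.concaveOn (mul_mem ht) (mul_mem hh)
    (hasDerivAt_sin (h * s))
  linarith

-- Multiplied by `t`, this is Jordan's inequality `(t - π) / π ≤ sin ((t - π) / 2)`, squared.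
lemma meanSin_le_tangent_pi {t : ℝ} (hπt : π ≤ t) (ht : t ≤ 2 * π) :
    meanSin t ≤ meanSin π + meanSinDeriv π * (t - π) := by
  have ht₀ : 0 < t := pi_pos.trans_le hπt
  have hjordan : ((t - π) / π) ^ 2 ≤ sin ((t - π) / 2) ^ 2 := by
    refine pow_le_pow_left₀ (div_nonneg (by linarith) pi_pos.le) ?_ 2
    calc (t - π) / π = 2 / π * ((t - π) / 2) := by ring
      _ ≤ sin ((t - π) / 2) := mul_le_sin (by linarith) (by linarith)
  have hsin : sin (t / 2) ^ 2 = 1 - sin ((t - π) / 2) ^ 2 := by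
    rw [sub_div, sin_sub_pi_div_two, neg_sq, cos_sq']
    ring
  rw [meanSin_pi, meanSinDeriv_pi, meanSin_eq_div ht₀.ne', div_le_iff₀ ht₀, hsin]
  calc 2 * (1 - sin ((t - π) / 2) ^ 2) ≤ 2 * (1 - ((t - π) / π) ^ 2) := by linarith
    _ = (2 / π + -2 / π ^ 2 * (t - π)) * t := by field_simp; ring

-- `meanSin` is not concave on all of `[0, 2π]`: beyond `π` the tangent at `π` serves as majorant.
lemma meanSin_le_tangent {h t : ℝ} (hh : h ∈ Set.Icc 0 π) (ht : t ∈ Set.Icc 0 (2 * π)) :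
    meanSin t ≤ meanSin h + meanSinDeriv h * (t - h) := by
  rcases le_total t π with htπ | hπt
  · exact meanSin_le_tangent_of_le_pi hh ⟨ht.1, htπ⟩
  have hπ : π ∈ Set.Icc 0 π := ⟨pi_pos.le, le_rfl⟩
  have hslope := mul_le_mul_of_nonneg_right (meanSinDeriv_antitoneOn hh hπ hh.2)
    (sub_nonneg.2 hπt)
  linarith [meanSin_le_tangent_pi hπt ht.2, meanSin_le_tangent_of_le_pi hh hπ]

lemma sum_meanSin_le {n : ℕ} {t : Fin n → ℝ} {h : ℝ} (ht : ∀ i, 0 ≤ t i)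
    (hsum : ∑ i, t i = n * h) (hle : n * h ≤ 2 * π) :
    ∑ i, meanSin (t i) ≤ n * meanSin h := by
  have hnh : 0 ≤ n * h := hsum ▸ Finset.sum_nonneg fun i _ => ht i
  match n, t with
  | 0, _ => simp
  | 1, t => simp_all
  | k + 2, t =>
    have hh₀ : 0 ≤ h := nonneg_of_mul_nonneg_right hnh (by positivity)
    have hhπ : h ≤ π := by push_cast at hle; nlinarith [Nat.cast_nonneg (α := ℝ) k]
    have htangent (i : Fin (k + 2)) (_ : i ∈ Finset.univ) :
        meanSin (t i) ≤ meanSin h + meanSinDeriv h * (t i - h) := by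
      have hti := Finset.single_le_sum (fun j _ => ht j) (Finset.mem_univ i)
      exact meanSin_le_tangent ⟨hh₀, hhπ⟩ ⟨ht i, by linarith⟩
    simpa using sum_le_card_mul_of_le_tangent (by simpa using hsum) htangent

lemma setIntegral_le_mul_measureReal_add_setIntegral_max {X : Type*} [MeasurableSpace X]
    {μ : Measure X} {A D : Set X} {f : X → ℝ} (hAD : A ⊆ D) (hD : μ D ≠ ∞)
    (hf : IntegrableOn f D μ) (k : ℝ) :
    ∫ x in A, f x ∂μ ≤ k * μ.real A + ∫ x in D, max (f x - k) 0 ∂μ := by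
  have hk : IntegrableOn (fun _ => k) D μ := integrableOn_const hD
  have hpos : IntegrableOn (fun x => max (f x - k) 0) D μ := (hf.sub hk).pos_part
  have hsplit : ∫ x in A, (f x - k) ∂μ = ∫ x in A, f x ∂μ - k * μ.real A := by
    rw [integral_sub (hf.mono_set hAD) (hk.mono_set hAD), setIntegral_const, smul_eq_mul, mul_comm]
  have hmax : ∫ x in A, (f x - k) ∂μ ≤ ∫ x in A, max (f x - k) 0 ∂μ :=
    integral_mono ((hf.sub hk).mono_set hAD) (hpos.mono_set hAD) fun x => le_max_left _ _
  have hmono : ∫ x in A, max (f x - k) 0 ∂μ ≤ ∫ x in D, max (f x - k) 0 ∂μ :=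
    setIntegral_mono_set hpos (Eventually.of_forall fun x => le_max_right _ _) hAD.eventuallyLE
  linarith

lemma cos_le_cos_iff_abs_le {τ u : ℝ} (hτ : τ ∈ Set.Icc 0 π) (hu : |u| ≤ π) :
    cos τ ≤ cos u ↔ |u| ≤ τ := by
  rw [← cos_abs u]
  exact strictAntiOn_cos.le_iff_ge hτ ⟨abs_nonneg u, hu⟩

lemma integral_max_cos_sub_cos {τ : ℝ} (hτ : τ ∈ Set.Icc 0 π) :
    ∫ u in -π..π, max (cos u - cos τ) 0 = 2 * (sin τ - τ * cos τ) := by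
  have hneg : -τ ≤ τ := by linarith [hτ.1]
  have hcongr : Set.EqOn (fun u => max (cos u - cos τ) 0)
      ((Set.Icc (-τ) τ).indicator fun u => cos u - cos τ) (Set.Icc (-π) π) := by
    intro u hu
    have hiff := cos_le_cos_iff_abs_le hτ (abs_le.2 hu)
    by_cases huτ : u ∈ Set.Icc (-τ) τ
    · rw [Set.indicator_of_mem huτ]
      exact max_eq_left (sub_nonneg.2 (hiff.2 (abs_le.2 huτ)))
    · rw [Set.indicator_of_notMem huτ]
      exact max_eq_right (sub_nonpos.2 (not_le.1 fun hle => huτ (abs_le.1 (hiff.1 hle))).le)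
  rw [intervalIntegral.integral_of_le (by linarith [pi_pos]), ← integral_Icc_eq_integral_Ioc,
    setIntegral_congr_fun measurableSet_Icc hcongr, setIntegral_indicator measurableSet_Icc,
    Set.inter_eq_self_of_subset_right (Set.Icc_subset_Icc (neg_le_neg hτ.2) hτ.2),
    integral_Icc_eq_integral_Ioc, ← intervalIntegral.integral_of_le hneg,
    intervalIntegral.integral_sub (Continuous.intervalIntegrable (by fun_prop) _ _)
      (Continuous.intervalIntegrable (by fun_prop) _ _),
    integral_cos, intervalIntegral.integral_const, sin_neg, smul_eq_mul]
  ring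

lemma volume_real_le_of_subset_Icc {a b : ℝ} (hab : a ≤ b) {A : Set ℝ} (hA : A ⊆ Set.Icc a b) :
    volume.real A ≤ b - a :=
  (measureReal_mono hA measure_Icc_lt_top.ne).trans_eq (Real.volume_real_Icc_of_le hab)

lemma setIntegral_cos_sub_le {a : ℝ} {A : Set ℝ} (hA : A ⊆ Set.Icc a (a + 2 * π)) (φ : ℝ) :
    ∫ u in A, cos (u - φ) ≤ 2 * sin (volume.real A / 2) := by
  set τ := volume.real A / 2 with hτdef
  have hperiod_le : a ≤ a + 2 * π := by linarith [two_pi_pos]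
  have hτ : τ ∈ Set.Icc 0 π :=
    ⟨div_nonneg measureReal_nonneg two_pos.le,
      by linarith [volume_real_le_of_subset_Icc hperiod_le hA]⟩
  have hper : Function.Periodic (fun u => max (cos (u - φ) - cos τ) 0) (2 * π) := fun u => by
    simp only [add_sub_right_comm, cos_add_two_pi]
  have hperiod : ∫ u in Set.Icc a (a + 2 * π), max (cos (u - φ) - cos τ) 0 =
      2 * (sin τ - τ * cos τ) := by
    rw [integral_Icc_eq_integral_Ioc, ← intervalIntegral.integral_of_le hperiod_le,
      hper.intervalIntegral_add_eq a (φ - π),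
      intervalIntegral.integral_comp_sub_right (fun u => max (cos u - cos τ) 0),
      ← integral_max_cos_sub_cos hτ]
    congr 1 <;> ring
  have hbathtub := setIntegral_le_mul_measureReal_add_setIntegral_max (μ := volume) hA
    measure_Icc_lt_top.ne (Continuous.integrableOn_Icc (f := fun u => cos (u - φ)) (by fun_prop))
    (cos τ)
  have hvol : volume.real A = 2 * τ := by rw [hτdef]; ring
  rw [hperiod, hvol] at hbathtub
  linarith

lemma four_mul_mul_sin_half_le {t : ℝ} (ht : 0 ≤ t) (r : ℝ) :
    4 * r * sin (t / 2) ≤ t * r ^ 2 + 2 * meanSin t := by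
  rcases ht.eq_or_lt with rfl | ht
  · simp [meanSin]
  refine le_of_mul_le_mul_left ?_ ht
  linarith [sq_nonneg (t * r - 2 * sin (t / 2)), mul_meanSin t]

lemma volume_real_sub_two_mul_meanSin_le_setIntegral {a : ℝ} {A : Set ℝ}
    (hA : A ⊆ Set.Icc a (a + 2 * π)) (c : E2) :
    volume.real A - 2 * meanSin (volume.real A) ≤ ∫ u in A, dist (polarPt 1 u) c ^ 2 := by
  obtain ⟨r, φ, hr, rfl⟩ := exists_eq_polarPt c
  have hAint {f : ℝ → ℝ} (hf : Continuous f) : IntegrableOn f A := hf.integrableOn_Icc.mono_set hA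
  have hexpand : ∫ u in A, dist (polarPt 1 u) (polarPt r φ) ^ 2 =
      volume.real A * (1 + r ^ 2) - 2 * r * ∫ u in A, cos (u - φ) := by
    simp_rw [dist_polarPt_sq, one_pow, mul_one]
    rw [integral_sub (hAint (by fun_prop)) (hAint (by fun_prop)), setIntegral_const, smul_eq_mul,
      integral_const_mul]
  have hcos := mul_le_mul_of_nonneg_left (setIntegral_cos_sub_le hA φ) (mul_nonneg two_pos.le hr)
  rw [hexpand]
  linarith [four_mul_mul_sin_half_le measureReal_nonneg r (t := volume.real A)]

lemma exists_voronoi_partition {X E : Type*} [MeasurableSpace X] [PseudoMetricSpace E]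
    [MeasurableSpace E] [OpensMeasurableSpace E] {f : X → E} (hf : Measurable f) {D : Set X}
    (hD : MeasurableSet D) {n : ℕ} [NeZero n] (c : Fin n → E) :
    ∃ A : Fin n → Set X, (∀ i, MeasurableSet (A i)) ∧ Pairwise (Function.onFun Disjoint A) ∧
      ⋃ i, A i = D ∧ ∀ i, ∀ x ∈ A i, Metric.infDist (f x) (Set.range c) = dist (f x) (c i) := by
  set V : Fin n → Set X :=
    fun i => D ∩ {x | Metric.infDist (f x) (Set.range c) = dist (f x) (c i)}
  have hV (i : Fin n) : MeasurableSet (V i) := hD.inter <| measurableSet_eq_fun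
    ((Metric.continuous_infDist_pt _).measurable.comp hf)
    ((continuous_id.dist continuous_const).measurable.comp hf)
  refine ⟨disjointed V, fun i => disjointedRec (fun _ _ ht => ht.diff (hV _)) (hV i),
    disjoint_disjointed V, ?_, fun i x hx => (disjointed_subset V i hx).2⟩
  rw [iUnion_disjointed]
  refine (Set.iUnion_subset fun i => Set.inter_subset_left).antisymm fun x hx => ?_
  obtain ⟨_, ⟨i, rfl⟩, hi⟩ := (Set.finite_range c).isCompact.exists_infDist_eq_dist
    (Set.range_nonempty c) (f x)
  exact Set.mem_iUnion.2 ⟨i, hx, hi⟩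

lemma continuous_infDist_polarPt_one_sq (s : Set E2) :
    Continuous fun u => Metric.infDist (polarPt 1 u) s ^ 2 :=
  ((Metric.continuous_infDist_pt s).comp (continuous_polarPt 1)).pow 2

lemma mul_le_setIntegral_infDist_range_sq {a b : ℝ} (hab : a ≤ b) (hle : b - a ≤ 2 * π) {n : ℕ}
    [NeZero n] (c : Fin n → E2) :
    n * ((b - a) / n - 2 * meanSin ((b - a) / n)) ≤
      ∫ u in Set.Icc a b, Metric.infDist (polarPt 1 u) (Set.range c) ^ 2 := by
  obtain ⟨A, hAm, hAd, hAU, hAdist⟩ :=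
    exists_voronoi_partition (continuous_polarPt 1).measurable (measurableSet_Icc (a := a)) c
  have hA (i : Fin n) : A i ⊆ Set.Icc a b := hAU ▸ Set.subset_iUnion A i
  have hn : (n : ℝ) * ((b - a) / n) = b - a := mul_div_cancel₀ _ (NeZero.ne _)
  have hsum : ∑ i, volume.real (A i) = n * ((b - a) / n) := by
    rw [← measureReal_iUnion_fintype hAd hAm fun i =>
      ((measure_mono (hA i)).trans_lt measure_Icc_lt_top).ne, hAU,
      Real.volume_real_Icc_of_le hab, hn]
  have hmean := sum_meanSin_le (fun i => measureReal_nonneg) hsum (hn.trans_le hle)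
  calc n * ((b - a) / n - 2 * meanSin ((b - a) / n))
      ≤ ∑ i, (volume.real (A i) - 2 * meanSin (volume.real (A i))) := by
        rw [Finset.sum_sub_distrib, ← Finset.mul_sum, hsum]
        linarith
    _ ≤ ∑ i, ∫ u in A i, dist (polarPt 1 u) (c i) ^ 2 :=
        Finset.sum_le_sum fun i _ => volume_real_sub_two_mul_meanSin_le_setIntegral
          ((hA i).trans (Set.Icc_subset_Icc_right (by linarith))) (c i)
    _ = ∑ i, ∫ u in A i, Metric.infDist (polarPt 1 u) (Set.range c) ^ 2 :=
        Finset.sum_congr rfl fun i _ => setIntegral_congr_fun (hAm i) fun u hu => by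
          simp only [hAdist i u hu]
    _ = ∫ u in Set.Icc a b, Metric.infDist (polarPt 1 u) (Set.range c) ^ 2 := by
        rw [← integral_iUnion_fintype hAm hAd fun i =>
          (continuous_infDist_polarPt_one_sq _).integrableOn_Icc.mono_set (hA i), hAU]

lemma exists_fin_range_eq {X : Type*} {s : Set X} (hs : s.Finite) (hne : s.Nonempty) {n : ℕ}
    (hcard : s.ncard ≤ n) : ∃ c : Fin n → X, Set.range c = s := by
  have : Fintype s := hs.fintype
  have : Nonempty s := hne.to_subtype
  obtain ⟨e⟩ : Nonempty (s ↪ Fin n) := Function.Embedding.nonempty_of_card_le (by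
    rwa [Fintype.card_fin, ← Nat.card_eq_fintype_card, Nat.card_coe_set_eq])
  refine ⟨(↑) ∘ Function.invFun e, ?_⟩
  rw [(Function.invFun_surjective e.injective).range_comp, Subtype.range_coe]

/-- The centroids of the `n` subarcs of equal length into which the arc from angle `a` to angle `b`
is divided; the `j`th one lies on the bisector of the `j`th subarc, counting from `1`. -/
def arcMeans (a b : ℝ) (n : ℕ) : Set E2 :=
  {p | ∃ j : ℕ, 1 ≤ j ∧ j ≤ n ∧ p = polarPt ((2 * n / (b - a)) * sin ((b - a) / (2 * n)))
    (a + (2 * (j : ℝ) - 1) * (b - a) / (2 * n))}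

lemma arcMeans_eq_image (a b : ℝ) (n : ℕ) :
    arcMeans a b n = (fun j : ℕ => polarPt ((2 * n / (b - a)) * sin ((b - a) / (2 * n)))
      (a + (2 * (j : ℝ) - 1) * (b - a) / (2 * n))) '' (Finset.Icc 1 n) := by
  ext p
  simp only [arcMeans, Set.mem_ofPred_eq, Set.mem_image, Finset.coe_Icc, Set.mem_Icc, and_assoc,
    eq_comm]

lemma arcMeans_finite (a b : ℝ) (n : ℕ) : (arcMeans a b n).Finite :=
  arcMeans_eq_image a b n ▸ (Finset.finite_toSet _).image _

lemma arcMeans_nonempty (a b : ℝ) {n : ℕ} (hn : 1 ≤ n) : (arcMeans a b n).Nonempty :=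
  ⟨_, 1, le_rfl, hn, rfl⟩

lemma ncard_arcMeans_le (a b : ℝ) (n : ℕ) : (arcMeans a b n).ncard ≤ n := by
  rw [arcMeans_eq_image]
  refine (Set.ncard_image_le (Finset.finite_toSet _)).trans_eq ?_
  rw [Set.ncard_coe_finset, Nat.card_Icc, Nat.add_sub_cancel]

lemma polarPt_mem_arcMeans (a b : ℝ) {n i : ℕ} (hi : i < n) :
    polarPt (2 / ((b - a) / n) * sin ((b - a) / n / 2))
      (a + (i + 1 / 2) * ((b - a) / n)) ∈ arcMeans a b n := by
  refine ⟨i + 1, i.succ_pos, hi, ?_⟩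
  have : (n : ℝ) ≠ 0 := Nat.cast_ne_zero.2 (by omega)
  congr 1
  · rw [div_div_eq_mul_div, div_div, mul_comm (n : ℝ) 2]
  · push_cast
    field_simp
    ring

lemma integral_dist_polarPt_sq {h : ℝ} (hh : h ≠ 0) (m : ℝ) :
    ∫ u in m - h / 2..m + h / 2, dist (polarPt 1 u) (polarPt (2 / h * sin (h / 2)) m) ^ 2 =
      h - 2 * meanSin h := by
  simp_rw [dist_polarPt_sq]
  rw [intervalIntegral.integral_sub (Continuous.intervalIntegrable (by fun_prop) _ _)
      (Continuous.intervalIntegrable (by fun_prop) _ _), intervalIntegral.integral_const,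
    intervalIntegral.integral_const_mul, intervalIntegral.integral_comp_sub_right cos, integral_cos,
    sub_sub_cancel_left, add_sub_cancel_left, sin_neg, smul_eq_mul, meanSin_eq_div hh]
  field_simp
  ring

lemma setIntegral_infDist_arcMeans_sq_le {a b : ℝ} (hab : a < b) {n : ℕ} [NeZero n] :
    ∫ u in Set.Icc a b, Metric.infDist (polarPt 1 u) (arcMeans a b n) ^ 2 ≤
      n * ((b - a) / n - 2 * meanSin ((b - a) / n)) := by
  have hn : (0 : ℝ) < n := Nat.cast_pos.2 (NeZero.pos n)
  set h := (b - a) / n with hdef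
  have hh : 0 < h := div_pos (sub_pos.2 hab) hn
  have hb : a + n * h = b := by rw [hdef]; field_simp; ring
  have hcont := continuous_infDist_polarPt_one_sq (arcMeans a b n)
  have hpiece (i : ℕ) (hi : i ∈ Finset.range n) :
      ∫ u in a + i * h..a + (i + 1 : ℕ) * h, Metric.infDist (polarPt 1 u) (arcMeans a b n) ^ 2 ≤
        h - 2 * meanSin h := by
    set m := a + (i + 1 / 2) * h with hm
    have hcentroid := polarPt_mem_arcMeans a b (Finset.mem_range.1 hi)
    rw [show a + i * h = m - h / 2 by rw [hm]; ring,
      show a + (i + 1 : ℕ) * h = m + h / 2 by rw [hm]; push_cast; ring,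
      ← integral_dist_polarPt_sq hh.ne' m]
    refine intervalIntegral.integral_mono_on (by linarith) (hcont.intervalIntegrable _ _)
      (((continuous_polarPt 1).dist continuous_const).pow 2 |>.intervalIntegrable _ _) fun u _ => ?_
    exact pow_le_pow_left₀ Metric.infDist_nonneg (Metric.infDist_le_dist_of_mem hcentroid) 2
  have hsplit := intervalIntegral.sum_integral_adjacent_intervals (μ := volume) (n := n)
    (a := fun i : ℕ => a + i * h) fun _ _ => hcont.intervalIntegrable _ _
  simp only [Nat.cast_zero, zero_mul, add_zero, hb] at hsplit
  rw [integral_Icc_eq_integral_Ioc, ← intervalIntegral.integral_of_le hab.le, ← hsplit]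
  simpa using Finset.sum_le_card_nsmul _ _ _ hpiece

lemma sInf_image_norm_sub_sq_eq_infDist_sq {E : Type*} [SeminormedAddCommGroup E] {s : Set E}
    (hs : IsCompact s) (hne : s.Nonempty) (x : E) :
    sInf ((fun a => ‖x - a‖ ^ 2) '' s) = Metric.infDist x s ^ 2 := by
  simp_rw [← dist_eq_norm]
  obtain ⟨y, hy, hxy⟩ := hs.exists_infDist_eq_dist hne x
  refine IsLeast.csInf_eq ⟨⟨y, hy, by rw [hxy]⟩, ?_⟩
  rintro _ ⟨z, hz, rfl⟩
  exact pow_le_pow_left₀ Metric.infDist_nonneg (Metric.infDist_le_dist_of_mem hz) 2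

lemma integral_sInf_arcP {a b : ℝ} (hab : a ≤ b) (hle : b - a ≤ 2 * π) {s : Set E2}
    (hs : IsCompact s) (hne : s.Nonempty) :
    ∫ x, sInf ((fun c => ‖x - c‖ ^ 2) '' s) ∂arcP a b =
      (b - a)⁻¹ * ∫ u in Set.Icc a b, Metric.infDist (polarPt 1 u) s ^ 2 := by
  simp_rw [sInf_image_norm_sub_sq_eq_infDist_sq hs hne]
  exact integral_arcP hab hle ((Metric.continuous_infDist_pt s).pow 2)

lemma isOptimalSet_and_quantErr_eq {P : Measure E2} {n : ℕ} {α : Set E2} {v : ℝ}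
    (hfin : α.Finite) (hne : α.Nonempty) (hcard : α.ncard ≤ n)
    (hα : ∫ x, sInf ((fun a => ‖x - a‖ ^ 2) '' α) ∂P ≤ v)
    (hlower : ∀ s : Set E2, s.Finite → s.Nonempty → s.ncard ≤ n →
      v ≤ ∫ x, sInf ((fun a => ‖x - a‖ ^ 2) '' s) ∂P) :
    IsOptimalSet P n α ∧ quantErr P n = v := by
  have hαv := hα.antisymm (hlower α hfin hne hcard)
  have hquant : quantErr P n = v := by
    refine IsLeast.csInf_eq ⟨⟨α, hfin, hne, hcard, hαv.symm⟩, ?_⟩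
    rintro _ ⟨s, hs, hsne, hscard, rfl⟩
    exact hlower s hs hsne hscard
  exact ⟨⟨hfin, hne, hcard, hαv.trans hquant.symm⟩, hquant⟩

lemma one_sub_mul_sin_sq_eq {T : ℝ} (hT : T ≠ 0) {n : ℕ} [NeZero n] :
    1 - 4 * (n : ℝ) ^ 2 / T ^ 2 * sin (T / (2 * n)) ^ 2 =
      T⁻¹ * (n * (T / n - 2 * meanSin (T / n))) := by
  have hn : (n : ℝ) ≠ 0 := NeZero.ne _
  rw [meanSin_eq_div (div_ne_zero hT hn), div_div T, mul_comm (n : ℝ) 2]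
  field_simp
  ring

theorem stmt_10_general {a b : ℝ} (hab : a < b) (hle : b - a ≤ 2 * π) {n : ℕ} (hn : 1 ≤ n) :
    IsOptimalSet (arcP a b) n (arcMeans a b n) ∧
    quantErr (arcP a b) n =
      1 - (4 * (n : ℝ) ^ 2 / (b - a) ^ 2) * sin ((b - a) / (2 * n)) ^ 2 := by
  have : NeZero n := ⟨Nat.one_le_iff_ne_zero.1 hn⟩
  have hT : 0 < b - a := sub_pos.2 hab
  have hfin := arcMeans_finite a b n
  have hne := arcMeans_nonempty a b hn
  rw [one_sub_mul_sin_sq_eq hT.ne']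
  refine isOptimalSet_and_quantErr_eq hfin hne (ncard_arcMeans_le a b n) ?upper ?lower
  case upper =>
    rw [integral_sInf_arcP hab.le hle hfin.isCompact hne]
    gcongr
    exact setIntegral_infDist_arcMeans_sq_le hab
  case lower =>
    intro s hs hsne hscard
    rw [integral_sInf_arcP hab.le hle hs.isCompact hsne]
    obtain ⟨c, rfl⟩ := exists_fin_range_eq hs hsne hscard
    gcongr
    exact mul_le_setIntegral_infDist_range_sq hab.le hle c

/-- For the uniform distribution on the unit circular arc
`S = {(cos θ, sin θ) : a ≤ θ ≤ b}` with `0 ≤ a < b ≤ 2π`, for every `n ≥ 1` the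
set `{(2n/(b-a)) sin((b-a)/(2n)) (cos(a+(2j-1)(b-a)/(2n)), sin(a+(2j-1)(b-a)/(2n))) :
j = 1, …, n}` forms an optimal set of `n`-means, and
`Vₙ = 1 - (4n²/(b-a)²) sin²((b-a)/(2n))`. -/
theorem stmt_10 (a b : ℝ) (h0 : 0 ≤ a) (hab : a < b) (h2 : b ≤ 2 * Real.pi)
    (n : ℕ) (hn : 1 ≤ n) :
    IsOptimalSet (arcP a b) n
      {p | ∃ j : ℕ, 1 ≤ j ∧ j ≤ n ∧
        p = pt ((2 * n / (b - a)) * Real.sin ((b - a) / (2 * n)) *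
              Real.cos (a + (2 * (j : ℝ) - 1) * (b - a) / (2 * n)))
            ((2 * n / (b - a)) * Real.sin ((b - a) / (2 * n)) *
              Real.sin (a + (2 * (j : ℝ) - 1) * (b - a) / (2 * n)))} ∧
    quantErr (arcP a b) n =
      1 - (4 * (n : ℝ) ^ 2 / (b - a) ^ 2) * Real.sin ((b - a) / (2 * n)) ^ 2 :=
  stmt_10_general hab (by linarith) hn
end
end
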